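/- Assume there exist α > 0 and a real constant c such that k^α r(k) → c as k → ∞, fix an integer p ≥ 1 with r_{Z^{(p)}}(0) > 0, and assume moreover that r_{Z^{(p)}} is asymptotically of constant sign with |r_{Z^{(p)}}| eventually monotone. Then with f₂(x) = x² there exist constants c₀, C₀ > 0 such that for all n ≥ 1: c₀/√n ≤ d_W( U_{f₂,n}(Z^{(p)}), N(0, u_{f₂}(Z^{(p)})) ) ≤ C₀/√n. -/

import Mathlib

open MeasureTheory ProbabilityTheory Filter
open scoped NNReal ENNReal

noncomputable section

variable {Ω : Type*} [MeasureSpace Ω]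

/-- `Z` is a centered stationary Gaussian sequence with covariance `r`. -/
def IsCSG (Z : ℤ → Ω → ℝ) (r : ℤ → ℝ) : Prop :=
  (∀ k, Measurable (Z k)) ∧
  (∀ (s : Finset ℤ) (a : ℤ → ℝ), ∃ v : ℝ≥0,
    Measure.map (fun ω => ∑ k ∈ s, a k * Z k ω) (ℙ : Measure Ω) = gaussianReal 0 v) ∧
  (∀ j k : ℤ, ∫ ω, Z j ω * Z k ω = r (k - j)) ∧
  0 < r 0

/-- `m`-th probabilists' Hermite polynomial, as a function on `ℝ`. -/
def hermiteFun (m : ℕ) (x : ℝ) : ℝ := Polynomial.aeval x (Polynomial.hermite m)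

/-- The polynomial `f_q(x) = ∑_{k=0}^{q/2} d_{2k} He_{2k}(x/√r0)`. -/
def fpoly (r0 : ℝ) (d : ℕ → ℝ) (q : ℕ) (x : ℝ) : ℝ :=
  ∑ k ∈ Finset.range (q / 2 + 1), d (2 * k) * hermiteFun (2 * k) (x / Real.sqrt r0)

/-- Polynomial variation `Q_{f,n}(X)`. -/
def Qvar (f : ℝ → ℝ) (X : ℤ → Ω → ℝ) (n : ℕ) (ω : Ω) : ℝ :=
  (1 / (n : ℝ)) * ∑ i ∈ Finset.range n, f (X (i : ℤ) ω)

/-- `λ_f(X) = E[f(X_0)]`. -/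
def lamE (f : ℝ → ℝ) (X : ℤ → Ω → ℝ) : ℝ := ∫ ω, f (X 0 ω)

/-- `U_{f,n}(X) = √n (Q_{f,n}(X) − λ_f(X))`. -/
def Ustat (f : ℝ → ℝ) (X : ℤ → Ω → ℝ) (n : ℕ) (ω : Ω) : ℝ :=
  Real.sqrt n * (Qvar f X n ω - lamE f X)

/-- Variance of `U_{f,n}(X)`. -/
def varU (f : ℝ → ℝ) (X : ℤ → Ω → ℝ) (n : ℕ) : ℝ := ∫ ω, (Ustat f X n ω) ^ 2

/-- Standardized statistic `F_{f,n}(X)`. -/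
def Fstat (f : ℝ → ℝ) (X : ℤ → Ω → ℝ) (n : ℕ) (ω : Ω) : ℝ :=
  Ustat f X n ω / Real.sqrt (varU f X n)

/-- fourth cumulant `κ₄(X) = E[X⁴] − 3 (E[X²])²` of a centered random variable. -/
def kappa4 (X : Ω → ℝ) : ℝ := (∫ ω, X ω ^ 4) - 3 * (∫ ω, X ω ^ 2) ^ 2

/-- third cumulant `κ₃(X) = E[X³]`. -/
def kappa3 (X : Ω → ℝ) : ℝ := ∫ ω, X ω ^ 3

/-- `u_{f_q}(Z) = ∑_{k=1}^{q/2} d_{2k}² (2k)! ∑_{j∈ℤ} (r(j)/r(0))^{2k}`. -/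
def ufq (r : ℤ → ℝ) (d : ℕ → ℝ) (q : ℕ) : ℝ :=
  ∑ k ∈ Finset.Icc 1 (q / 2),
    (d (2 * k)) ^ 2 * (Nat.factorial (2 * k)) * ∑' j : ℤ, (r j / r 0) ^ (2 * k)

/-- Total variation distance between two laws on `ℝ`. -/
def dTV (μ ν : Measure ℝ) : ℝ :=
  ⨆ A : {A : Set ℝ // MeasurableSet A}, |(μ A.1).toReal - (ν A.1).toReal|

/-- Wasserstein distance between two laws on `ℝ`. -/
def dW (μ ν : Measure ℝ) : ℝ :=
  ⨆ f : {f : ℝ → ℝ // LipschitzWith 1 f}, |(∫ x, f.1 x ∂μ) - ∫ x, f.1 x ∂ν|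

/-- The quadratic function `f₂(x) = x²`. -/
def f2 : ℝ → ℝ := fun x => x ^ 2

/-- `U_{f₂,n}(X) = √n (Q_{f₂,n}(X) − r(0))`, quadratic case. -/
def U2 (X : ℤ → Ω → ℝ) (r0 : ℝ) (n : ℕ) (ω : Ω) : ℝ :=
  Real.sqrt n * (Qvar f2 X n ω - r0)

/-- Variance of `U_{f₂,n}`. -/
def varU2 (X : ℤ → Ω → ℝ) (r0 : ℝ) (n : ℕ) : ℝ := ∫ ω, (U2 X r0 n ω) ^ 2

/-- Standardized quadratic statistic `F_{f₂,n}`. -/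
def F2stat (X : ℤ → Ω → ℝ) (r0 : ℝ) (n : ℕ) (ω : Ω) : ℝ :=
  U2 X r0 n ω / Real.sqrt (varU2 X r0 n)

/-- `p`-th order finite difference of a sequence of processes. -/
def fdiff : ℕ → (ℤ → Ω → ℝ) → (ℤ → Ω → ℝ)
  | 0, Z => Z
  | (p + 1), Z => fun k ω => fdiff p Z (k + 1) ω - fdiff p Z k ω


lemma integrable_exp_neg_sq_div_two : Integrable fun x : ℝ => Real.exp (-x ^ 2 / 2) := by
  have := integrable_exp_neg_mul_sq (b := 1 / 2) (by norm_num)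
  refine this.congr (ae_of_all _ fun x => ?_)
  simp only; congr 1; ring

lemma integrable_mul_exp_neg_sq_div_two : Integrable fun x : ℝ => x * Real.exp (-x ^ 2 / 2) := by
  have := integrable_mul_exp_neg_mul_sq (b := 1 / 2) (by norm_num)
  refine this.congr (ae_of_all _ fun x => ?_)
  simp only; congr 2; ring

lemma integral_Ioi_mul_exp_neg_sq_div_two (w : ℝ) :
    ∫ x in Set.Ioi w, x * Real.exp (-x ^ 2 / 2) = Real.exp (-w ^ 2 / 2) := by
  have hd : ∀ x ∈ Set.Ici w, HasDerivAt (fun x : ℝ => -Real.exp (-x ^ 2 / 2))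
      (x * Real.exp (-x ^ 2 / 2)) x := by
    intro x _
    have h1 : HasDerivAt (fun x : ℝ => -x ^ 2 / 2) (-x) x := by
      have := ((hasDerivAt_pow 2 x).fun_neg).div_const 2
      refine this.congr_deriv ?_
      push_cast; ring
    exact h1.exp.fun_neg.congr_deriv (by ring)
  have ht : Tendsto (fun x : ℝ => -Real.exp (-x ^ 2 / 2)) atTop (nhds 0) := by
    rw [← neg_zero]
    refine Tendsto.neg (Real.tendsto_exp_atBot.comp ?_)
    refine Tendsto.atBot_div_const (by norm_num) ?_
    exact tendsto_neg_atTop_atBot.comp (tendsto_pow_atTop (by norm_num))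
  rw [integral_Ioi_of_hasDerivAt_of_tendsto' hd integrable_mul_exp_neg_sq_div_two.integrableOn ht]
  ring

lemma integrable_lipschitz_mul_exp {g : ℝ → ℝ} (hg : LipschitzWith 1 g) :
    Integrable fun x : ℝ => g x * Real.exp (-x ^ 2 / 2) := by
  have h1 : Integrable fun x : ℝ => |g 0| * Real.exp (-x ^ 2 / 2) + |x * Real.exp (-x ^ 2 / 2)| :=
    (integrable_exp_neg_sq_div_two.const_mul _).add integrable_mul_exp_neg_sq_div_two.abs
  refine h1.mono' ?_ (ae_of_all _ fun x => ?_)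
  · exact (hg.continuous.mul (by fun_prop)).aestronglyMeasurable
  · have h2 : |g x| ≤ |g 0| + |x| := by
      have := hg.dist_le_mul x 0
      simp only [Real.dist_eq, NNReal.coe_one, one_mul, sub_zero] at this
      have := abs_sub_abs_le_abs_sub (g x) (g 0)
      linarith
    rw [Real.norm_eq_abs, abs_mul, abs_mul, Real.abs_exp, ← add_mul]
    gcongr

lemma stein_kernel_bound {w x : ℝ} (hw : 0 ≤ w) (hx : w ≤ x) :
    (x - w) * (2 * w + 1) * Real.exp ((w ^ 2 - x ^ 2) / 2) ≤ 3 * Real.exp (-(1 / 4) * (x - w) ^ 2) := by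
  set y := x - w with hy
  have hy0 : 0 ≤ y := by linarith
  have hx' : x = w + y := by linarith
  have e : (w ^ 2 - x ^ 2) / 2 = -(w * y + y ^ 2 / 4) + -(1 / 4) * y ^ 2 := by rw [hx']; ring
  rw [e, Real.exp_add, ← mul_assoc]
  gcongr
  rw [Real.exp_neg, ← div_eq_mul_inv, div_le_iff₀ (Real.exp_pos _)]
  have := Real.add_one_le_exp (w * y + y ^ 2 / 4)
  nlinarith [sq_nonneg (y - 1), mul_nonneg hw hy0]

lemma stein_half_line_bound {g : ℝ → ℝ} (hg : LipschitzWith 1 g) (h0 : |g 0| ≤ 1) {w : ℝ}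
    (hw : 0 ≤ w) :
    |w * (Real.exp (w ^ 2 / 2) * ∫ x in Set.Ioi w, g x * Real.exp (-x ^ 2 / 2)) - g w|
      ≤ 3 * √(4 * Real.pi) := by
  have i1 := (integrable_lipschitz_mul_exp hg).integrableOn (s := Set.Ioi w)
  have i2 := integrable_mul_exp_neg_sq_div_two.integrableOn (s := Set.Ioi w)
  have e : w * (Real.exp (w ^ 2 / 2) * ∫ x in Set.Ioi w, g x * Real.exp (-x ^ 2 / 2)) - g w
      = ∫ x in Set.Ioi w, (w * g x - x * g w) * Real.exp ((w ^ 2 - x ^ 2) / 2) := by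
    have : g w = g w * (Real.exp (w ^ 2 / 2) *
        ∫ x in Set.Ioi w, x * Real.exp (-x ^ 2 / 2)) := by
      rw [integral_Ioi_mul_exp_neg_sq_div_two, ← Real.exp_add]
      ring_nf; simp
    conv_lhs => rw [this]
    rw [← integral_const_mul, ← integral_const_mul, ← integral_const_mul, ← integral_const_mul,
      ← integral_sub ((i1.const_mul _).const_mul _) ((i2.const_mul _).const_mul _)]
    refine integral_congr_ae (ae_of_all _ fun x => ?_)
    have : Real.exp ((w ^ 2 - x ^ 2) / 2) = Real.exp (w ^ 2 / 2) * Real.exp (-x ^ 2 / 2) := by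
      rw [← Real.exp_add]; congr 1; ring
    simp only [this]; ring
  have hl : ∀ x y, |g x - g y| ≤ |x - y| := fun x y => by
    simpa [Real.dist_eq] using hg.dist_le_mul x y
  have ig : Integrable fun x : ℝ => 3 * Real.exp (-(1 / 4) * (x - w) ^ 2) :=
    ((integrable_exp_neg_mul_sq (b := 1 / 4) (by norm_num)).comp_sub_right w).const_mul 3
  rw [e, ← Real.norm_eq_abs]
  calc _ ≤ ∫ x in Set.Ioi w, 3 * Real.exp (-(1 / 4) * (x - w) ^ 2) := by
        refine norm_integral_le_of_norm_le ig.integrableOn ?_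
        refine (ae_restrict_mem measurableSet_Ioi).mono fun x hx => ?_
        have hx : w < x := hx
        refine le_trans ?_ (stein_kernel_bound hw hx.le)
        rw [Real.norm_eq_abs, abs_mul, Real.abs_exp]
        gcongr
        have e1 : w * g x - x * g w = w * (g x - g w) - (x - w) * g w := by ring
        have h1 := hl x w
        have h2 := hl w 0
        rw [abs_of_pos (by linarith : 0 < x - w)] at h1
        rw [sub_zero, abs_of_nonneg hw] at h2
        have h3 := abs_sub_abs_le_abs_sub (g w) (g 0)
        rw [e1]
        refine (abs_sub _ _).trans ?_
        rw [abs_mul, abs_mul, abs_of_nonneg hw, abs_of_pos (by linarith : 0 < x - w)]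
        nlinarith
    _ ≤ ∫ x, 3 * Real.exp (-(1 / 4) * (x - w) ^ 2) :=
        setIntegral_le_integral ig (ae_of_all _ fun x => by positivity)
    _ = _ := by
        rw [integral_const_mul, integral_sub_right_eq_self (fun x => Real.exp (-(1 / 4) * x ^ 2)),
          integral_gaussian]
        congr 2; ring

lemma integrable_lipschitz_gaussianReal {h : ℝ → ℝ} {K : ℝ≥0} (hh : LipschitzWith K h) (m : ℝ)
    (v : ℝ≥0) : Integrable h (gaussianReal m v) := by
  have h1 : Integrable (fun x : ℝ => x) (gaussianReal m v) :=
    (memLp_id_gaussianReal 1).integrable le_rfl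
  refine ((integrable_const |h 0|).add (h1.abs.const_mul K)).mono'
    hh.continuous.aestronglyMeasurable (ae_of_all _ fun x => ?_)
  have := hh.dist_le_mul x 0
  simp only [Real.dist_eq, sub_zero] at this
  have := abs_sub_abs_le_abs_sub (h x) (h 0)
  simp only [Real.norm_eq_abs, Pi.add_apply]
  linarith

lemma integral_sq_gaussianReal (v : ℝ≥0) : ∫ x, x ^ 2 ∂gaussianReal 0 v = v := by
  have h1 := variance_fun_id_gaussianReal (μ := 0) (v := v)
  rw [variance_of_integral_eq_zero (by fun_prop) (by simp)] at h1
  exact h1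

lemma abs_sub_integral_gaussianReal_le {h : ℝ → ℝ} (hh : LipschitzWith 1 h) :
    |h 0 - ∫ x, h x ∂gaussianReal 0 1| ≤ 1 := by
  have hi := integrable_lipschitz_gaussianReal hh 0 1
  have h2 : Integrable (fun x : ℝ => x ^ 2) (gaussianReal 0 1) :=
    (memLp_id_gaussianReal 2).integrable_sq
  have e : h 0 - ∫ x, h x ∂gaussianReal 0 1 = ∫ x, (h 0 - h x) ∂gaussianReal 0 1 := by
    rw [integral_sub (integrable_const _) hi]; simp
  rw [e, ← Real.norm_eq_abs]
  calc _ ≤ ∫ x, (1 / 2 + 1 / 2 * x ^ 2) ∂gaussianReal 0 1 := by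
        refine norm_integral_le_of_norm_le ((integrable_const _).add (h2.const_mul _))
          (ae_of_all _ fun x => ?_)
        have := hh.dist_le_mul 0 x
        simp only [Real.dist_eq, zero_sub, abs_neg, NNReal.coe_one, one_mul] at this
        rw [Real.norm_eq_abs]
        nlinarith [sq_nonneg (|x| - 1), sq_abs x]
    _ = 1 := by
        rw [integral_add (integrable_const _) (h2.const_mul _), integral_const_mul,
          integral_sq_gaussianReal]
        simp; norm_num

lemma integral_gaussianReal_zero_one (f : ℝ → ℝ) :
    ∫ x, f x ∂gaussianReal 0 1 = (√(2 * Real.pi))⁻¹ * ∫ x, f x * Real.exp (-x ^ 2 / 2) := by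
  rw [integral_gaussianReal_eq_integral_smul one_ne_zero, ← integral_const_mul]
  refine integral_congr_ae (ae_of_all _ fun x => ?_)
  simp [gaussianPDFReal]; ring

/-- Solution of Stein's equation for the standard Gaussian law, with bounded derivative. -/
lemma exists_stein_solution_one {h : ℝ → ℝ} (hh : LipschitzWith 1 h) :
    ∃ F F' : ℝ → ℝ, (∀ w, HasDerivAt F (F' w) w) ∧ Continuous F' ∧
      (∀ w, |F' w| ≤ 3 * √(4 * Real.pi)) ∧
      ∀ w, F' w - w * F w = h w - ∫ x, h x ∂gaussianReal 0 1 := by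
  set c := ∫ x, h x ∂gaussianReal 0 1 with hc
  set g : ℝ → ℝ := fun x => h x - c with hg
  have hgl : LipschitzWith 1 g := by
    refine LipschitzWith.of_dist_le_mul fun x y => ?_
    simpa [hg, Real.dist_eq] using hh.dist_le_mul x y
  have hg0 : |g 0| ≤ 1 := abs_sub_integral_gaussianReal_le hh
  have hgi := integrable_lipschitz_mul_exp hgl
  have hgc : Continuous fun x => g x * Real.exp (-x ^ 2 / 2) := hgl.continuous.mul (by fun_prop)
  have htot : ∫ x, g x * Real.exp (-x ^ 2 / 2) = 0 := by
    have h1 := integral_gaussianReal_zero_one g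
    have h2 : ∫ x, g x ∂gaussianReal 0 1 = 0 := by
      simp only [hg]
      rw [integral_sub (integrable_lipschitz_gaussianReal hh 0 1) (integrable_const _)]
      simp [hc]
    rw [h2] at h1
    have h3 : (√(2 * Real.pi))⁻¹ ≠ 0 := by positivity
    exact (mul_eq_zero.1 h1.symm).resolve_left h3
  have hsplit : ∀ w, (∫ x in Set.Iic w, g x * Real.exp (-x ^ 2 / 2))
      = -∫ x in Set.Ioi w, g x * Real.exp (-x ^ 2 / 2) := by
    intro w
    have := intervalIntegral.integral_Iic_add_Ioi (b := w) hgi.integrableOn hgi.integrableOn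
    linarith
  set F : ℝ → ℝ := fun w =>
    Real.exp (w ^ 2 / 2) * ∫ x in Set.Iic w, g x * Real.exp (-x ^ 2 / 2) with hF
  have hFd : ∀ w, HasDerivAt F (w * F w + g w) w := by
    intro w
    have h1 : HasDerivAt (fun w : ℝ => Real.exp (w ^ 2 / 2)) (w * Real.exp (w ^ 2 / 2)) w := by
      have := ((hasDerivAt_pow 2 w).div_const 2).exp
      refine this.congr_deriv ?_
      push_cast; ring
    have h2 : HasDerivAt (fun w : ℝ => ∫ x in Set.Iic w, g x * Real.exp (-x ^ 2 / 2))
        (g w * Real.exp (-w ^ 2 / 2)) w := by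
      have e : (fun w : ℝ => ∫ x in Set.Iic w, g x * Real.exp (-x ^ 2 / 2)) =
          fun w => (∫ x in Set.Iic 0, g x * Real.exp (-x ^ 2 / 2)) +
            ∫ x in (0 : ℝ)..w, g x * Real.exp (-x ^ 2 / 2) := by
        funext w
        rw [← intervalIntegral.integral_Iic_sub_Iic hgi.integrableOn hgi.integrableOn]
        ring
      rw [e]
      exact (intervalIntegral.integral_hasDerivAt_right hgi.intervalIntegrable
        (hgc.stronglyMeasurableAtFilter _ _) hgc.continuousAt).const_add _
    refine (h1.mul h2).congr_deriv ?_
    have : Real.exp (w ^ 2 / 2) * Real.exp (-w ^ 2 / 2) = 1 := by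
      rw [← Real.exp_add]; ring_nf; simp
    simp only [hF]
    linear_combination g w * this
  refine ⟨F, fun w => w * F w + g w, hFd, ?_, fun w => ?_, fun w => by simp only [hg]; ring⟩
  · have : Continuous F := continuous_iff_continuousAt.2 fun w => (hFd w).continuousAt
    exact (continuous_id.mul this).add hgl.continuous
  · rcases le_total 0 w with hw | hw
    · have := stein_half_line_bound hgl hg0 hw
      rw [← abs_neg]
      convert this using 2
      simp only [hF, hsplit w]; ring
    · have hgl' : LipschitzWith 1 fun x => g (-x) := by
        refine LipschitzWith.of_dist_le_mul fun x y => ?_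
        simpa using hgl.dist_le_mul (-x) (-y)
      have := stein_half_line_bound hgl' (by simpa using hg0) (neg_nonneg.2 hw)
      rw [← abs_neg]
      convert this using 2
      have e := integral_comp_neg_Ioi (-w) fun x => g x * Real.exp (-x ^ 2 / 2)
      simp only [even_two, Even.neg_pow, neg_neg] at e ⊢
      rw [e]
      simp only [hF]; ring

/-- Solution of Stein's equation for a centred Gaussian law, with bounded derivative. -/
lemma exists_stein_solution {h : ℝ → ℝ} (hh : LipschitzWith 1 h) {v : ℝ≥0} (hv : 0 < v) :
    ∃ F F' : ℝ → ℝ, (∀ w, HasDerivAt F (F' w) w) ∧ Continuous F' ∧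
      (∀ w, |F' w| ≤ 3 * √(4 * Real.pi) / √v) ∧
      ∀ w, v * F' w - w * F w = h w - ∫ x, h x ∂gaussianReal 0 v := by
  set σ : ℝ := √v with hσ
  have hσ0 : 0 < σ := Real.sqrt_pos.2 (by exact_mod_cast hv)
  have hσ2 : σ * σ = v := Real.mul_self_sqrt v.2
  have hl : LipschitzWith 1 fun x => h (σ * x) / σ := by
    refine LipschitzWith.of_dist_le_mul fun x y => ?_
    have := hh.dist_le_mul (σ * x) (σ * y)
    simp only [Real.dist_eq, NNReal.coe_one, one_mul] at this ⊢
    rw [← mul_sub, abs_mul, abs_of_pos hσ0] at this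
    rw [← sub_div, abs_div, abs_of_pos hσ0, div_le_iff₀ hσ0]
    linarith
  obtain ⟨F, F', h1, h2, h3, h4⟩ := exists_stein_solution_one hl
  have hint : ∫ x, h x ∂gaussianReal 0 v = σ * ∫ x, h (σ * x) / σ ∂gaussianReal 0 1 := by
    have hm : gaussianReal 0 v = (gaussianReal 0 1).map (σ * ·) := by
      rw [gaussianReal_map_const_mul]
      congr 1
      · simp
      · ext; simp [sq, hσ2]
    rw [hm, integral_map (by fun_prop) hh.continuous.aestronglyMeasurable, ← integral_const_mul]
    refine integral_congr_ae (ae_of_all _ fun x => ?_)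
    simp only; field_simp
  refine ⟨fun w => F (w / σ), fun w => F' (w / σ) / σ, fun w => ?_, by fun_prop, fun w => ?_,
    fun w => ?_⟩
  · have := (h1 (w / σ)).comp w ((hasDerivAt_id w).div_const σ)
    refine this.congr_deriv ?_
    ring
  · rw [abs_div, abs_of_pos hσ0]
    gcongr
    exact h3 _
  · have := h4 (w / σ)
    rw [mul_div_cancel₀ _ hσ0.ne'] at this
    rw [hint, ← hσ2]
    field_simp at this ⊢
    linarith

lemma integrable_gaussianReal_of_abs_le {f : ℝ → ℝ} (hf : Continuous f) {A B : ℝ}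
    (h : ∀ x, |f x| ≤ A + B * x ^ 4) (v : ℝ≥0) : Integrable f (gaussianReal 0 v) := by
  have h4 : Integrable (fun x : ℝ => x ^ 4) (gaussianReal 0 v) := by
    have := (memLp_id_gaussianReal (μ := 0) (v := v) 4).integrable_norm_pow (p := 4) (by norm_num)
    refine this.congr (ae_of_all _ fun x => ?_)
    simp only [id, Real.norm_eq_abs]
    exact Even.pow_abs (by decide) x
  exact ((integrable_const A).add (h4.const_mul B)).mono' hf.aestronglyMeasurable
    (ae_of_all _ fun x => h x)

/-- Gaussian integration by parts. -/
lemma integral_mul_gaussianReal {v : ℝ≥0} {φ φ' : ℝ → ℝ} (hd : ∀ x, HasDerivAt φ (φ' x) x)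
    (h0 : Integrable φ (gaussianReal 0 v)) (h1 : Integrable (fun x => x * φ x) (gaussianReal 0 v))
    (h2 : Integrable φ' (gaussianReal 0 v)) :
    ∫ x, x * φ x ∂gaussianReal 0 v = v * ∫ x, φ' x ∂gaussianReal 0 v := by
  rcases eq_or_ne v 0 with rfl | hv
  · simp
  have hv' : (v : ℝ) ≠ 0 := by exact_mod_cast hv
  have hI : ∀ f : ℝ → ℝ, Integrable f (gaussianReal 0 v) →
      Integrable fun x => gaussianPDFReal 0 v x * f x := by
    intro f hf
    rw [gaussianReal_of_var_ne_zero _ hv, integrable_withDensity_iff_integrable_smul₀'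
      (by fun_prop) (ae_of_all _ fun x => gaussianPDF_lt_top)] at hf
    simpa using hf
  have hpd : ∀ x, HasDerivAt (gaussianPDFReal 0 v) (-(x / v) * gaussianPDFReal 0 v x) x := by
    intro x
    have h1 : HasDerivAt (fun x : ℝ => -(x - 0) ^ 2 / (2 * v)) (-(x / v)) x := by
      have := ((((hasDerivAt_id x).sub_const 0).fun_pow 2).fun_neg).div_const (2 * (v : ℝ))
      refine this.congr_deriv ?_
      simp; field_simp
    refine (h1.exp.const_mul (√(2 * Real.pi * v))⁻¹).congr_deriv ?_
    simp only [gaussianPDFReal]; ring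
  have key := integral_eq_zero_of_hasDerivAt_of_integrable
    (f := fun x => gaussianPDFReal 0 v x * φ x)
    (f' := fun x => -(1 / v) * (gaussianPDFReal 0 v x * (x * φ x)) + gaussianPDFReal 0 v x * φ' x)
    (fun x => ((hpd x).mul (hd x)).congr_deriv (by ring))
    (((hI _ h1).const_mul _).add (hI _ h2)) (hI _ h0)
  rw [integral_add ((hI _ h1).const_mul _) (hI _ h2), integral_const_mul] at key
  rw [integral_gaussianReal_eq_integral_smul hv, integral_gaussianReal_eq_integral_smul hv]
  simp only [smul_eq_mul]
  have hk : (v : ℝ) * (1 / v) = 1 := by field_simp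
  linear_combination (-(v : ℝ)) * key - hk * ∫ x, gaussianPDFReal 0 v x * (x * φ x)

lemma abs_le_of_hasDerivAt_bound {F F' : ℝ → ℝ} {K : ℝ} (hF : ∀ w, HasDerivAt F (F' w) w)
    (hK : ∀ w, |F' w| ≤ K) (w : ℝ) : |F w| ≤ |F 0| + K * |w| := by
  have := Convex.norm_image_sub_le_of_norm_hasDerivWithin_le (s := Set.univ)
    (fun x _ => (hF x).hasDerivWithinAt) (fun x _ => hK x) convex_univ (Set.mem_univ 0)
    (Set.mem_univ w)
  simp only [Real.norm_eq_abs, sub_zero] at this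
  have := abs_sub_abs_le_abs_sub (F w) (F 0)
  linarith

lemma integral_sq_sub_mul_gaussianReal {F F' : ℝ → ℝ} {K : ℝ} (hF : ∀ w, HasDerivAt F (F' w) w)
    (hc : Continuous F') (hK : ∀ w, |F' w| ≤ K) (v : ℝ≥0) (a r : ℝ) :
    ∫ x, (x ^ 2 - v) * F (a * (x ^ 2 - v) + r) ∂gaussianReal 0 v =
      2 * a * v * ∫ x, x ^ 2 * F' (a * (x ^ 2 - v) + r) ∂gaussianReal 0 v := by
  have hFc : Continuous F := continuous_iff_continuousAt.2 fun w => (hF w).continuousAt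
  have hK0 : 0 ≤ K := (abs_nonneg _).trans (hK 0)
  set A := |F 0| + K * (|a| * v + |r|) with hA
  have hA0 : 0 ≤ A := by positivity
  have hB0 : 0 ≤ K * |a| := by positivity
  have hFb : ∀ x : ℝ, |F (a * (x ^ 2 - v) + r)| ≤ A + K * |a| * x ^ 2 := by
    intro x
    refine (abs_le_of_hasDerivAt_bound hF hK _).trans ?_
    have h1 : |a * (x ^ 2 - v) + r| ≤ |a| * (x ^ 2 + v) + |r| := by
      refine (abs_add_le _ _).trans ?_
      rw [abs_mul]
      gcongr
      refine (abs_sub _ _).trans ?_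
      simp
    nlinarith
  have hx4 : ∀ x : ℝ, x ^ 2 ≤ 1 + x ^ 4 := fun x => by nlinarith [sq_nonneg (x ^ 2 - 1)]
  have i0 : Integrable (fun x => F (a * (x ^ 2 - v) + r)) (gaussianReal 0 v) := by
    refine integrable_gaussianReal_of_abs_le (by fun_prop) (A := A + K * |a|) (B := K * |a|)
      (fun x => (hFb x).trans ?_) v
    nlinarith [hx4 x]
  have i1 : Integrable (fun x => x ^ 2 * F (a * (x ^ 2 - v) + r)) (gaussianReal 0 v) := by
    refine integrable_gaussianReal_of_abs_le (by fun_prop) (A := A) (B := A + K * |a|)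
      (fun x => ?_) v
    rw [abs_mul, abs_of_nonneg (sq_nonneg x)]
    nlinarith [hx4 x, hFb x, mul_le_mul_of_nonneg_left (hFb x) (sq_nonneg x),
      mul_le_mul_of_nonneg_left (hx4 x) hA0]
  have i2 : Integrable (fun x => x ^ 2 * F' (a * (x ^ 2 - v) + r)) (gaussianReal 0 v) := by
    refine integrable_gaussianReal_of_abs_le (by fun_prop) (A := K) (B := K)
      (fun x => ?_) v
    rw [abs_mul, abs_of_nonneg (sq_nonneg x)]
    nlinarith [mul_le_mul_of_nonneg_left (hK (a * (x ^ 2 - v) + r)) (sq_nonneg x),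
      mul_le_mul_of_nonneg_left (hx4 x) hK0]
  have ix : Integrable (fun x => x * F (a * (x ^ 2 - v) + r)) (gaussianReal 0 v) := by
    refine (i0.abs.add i1.abs).mono' (by fun_prop) (ae_of_all _ fun x => ?_)
    simp only [Real.norm_eq_abs, abs_mul, Pi.add_apply, abs_pow]
    nlinarith [sq_nonneg (|x| - 1), abs_nonneg (F (a * (x ^ 2 - v) + r)),
      mul_nonneg (sq_nonneg (|x| - 1)) (abs_nonneg (F (a * (x ^ 2 - v) + r)))]
  have key := integral_mul_gaussianReal (v := v) (φ := fun x => x * F (a * (x ^ 2 - v) + r))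
    (φ' := fun x => F (a * (x ^ 2 - v) + r) + 2 * a * (x ^ 2 * F' (a * (x ^ 2 - v) + r)))
    (fun x => by
      have h1 : HasDerivAt (fun x : ℝ => a * (x ^ 2 - v) + r) (a * (2 * x)) x := by
        have := (((hasDerivAt_pow 2 x).sub_const (v : ℝ)).const_mul a).add_const r
        exact this.congr_deriv (by push_cast; ring)
      have := (hasDerivAt_id x).fun_mul ((hF (a * (x ^ 2 - v) + r)).comp x h1)
      refine this.congr_deriv ?_
      simp only [id, Function.comp]; ring) ix
    (i1.congr (ae_of_all _ fun x => by simp only; ring)) (i0.add (i2.const_mul _))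
  rw [integral_add i0 (i2.const_mul _), integral_const_mul] at key
  have e : ∫ x, (x ^ 2 - v) * F (a * (x ^ 2 - v) + r) ∂gaussianReal 0 v =
      ∫ x, x * (x * F (a * (x ^ 2 - v) + r)) ∂gaussianReal 0 v -
      v * ∫ x, F (a * (x ^ 2 - v) + r) ∂gaussianReal 0 v := by
    rw [← integral_const_mul, ← integral_sub
      (i1.congr (ae_of_all _ fun x => by simp only; ring)) (i0.const_mul _)]
    refine integral_congr_ae (ae_of_all _ fun x => ?_)
    simp only; ring
  rw [e, key]; ring

lemma integral_pow_four_gaussianReal (v : ℝ≥0) :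
    ∫ x, x ^ 4 ∂gaussianReal 0 v = 3 * (v : ℝ) ^ 2 := by
  have hx4 : ∀ x : ℝ, x ^ 2 ≤ 1 + x ^ 4 := fun x => by nlinarith [sq_nonneg (x ^ 2 - 1)]
  have key := integral_mul_gaussianReal (v := v) (φ := fun x => x ^ 3) (φ' := fun x => 3 * x ^ 2)
    (fun x => by simpa using hasDerivAt_pow 3 x)
    (integrable_gaussianReal_of_abs_le (A := 1) (B := 1) (by fun_prop) (fun x => by
      rw [abs_pow]
      nlinarith [sq_nonneg (|x| ^ 2 - |x|), sq_nonneg (|x| ^ 2 - 1), sq_abs x,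
        Even.pow_abs (n := 4) (by decide) x]) v)
    (integrable_gaussianReal_of_abs_le (A := 0) (B := 1) (by fun_prop) (fun x => by
      have : x * x ^ 3 = x ^ 4 := by ring
      rw [this, abs_of_nonneg (by positivity)]; linarith) v)
    (integrable_gaussianReal_of_abs_le (A := 3) (B := 3) (by fun_prop) (fun x => by
      rw [abs_of_nonneg (by positivity)]; linarith [hx4 x]) v)
  rw [integral_const_mul, integral_sq_gaussianReal] at key
  rw [show (fun x : ℝ => x ^ 4) = fun x => x * x ^ 3 by funext x; ring, key]; ring

section ChaosStein

variable {Ω : Type*} {mΩ : MeasurableSpace Ω} {P : Measure Ω}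

lemma integral_comp_of_map_eq {X : Ω → ℝ} (hX : Measurable X) {v : ℝ≥0}
    (hl : P.map X = gaussianReal 0 v) {f : ℝ → ℝ} (hf : Continuous f) :
    ∫ ω, f (X ω) ∂P = ∫ x, f x ∂gaussianReal 0 v := by
  rw [← hl, integral_map hX.aemeasurable hf.aestronglyMeasurable]

lemma memLp_sq_of_map_eq {X : Ω → ℝ} (hX : Measurable X) {v : ℝ≥0}
    (hl : P.map X = gaussianReal 0 v) : MemLp (fun ω => X ω ^ 2) 2 P := by
  rw [memLp_two_iff_integrable_sq (by fun_prop)]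
  have : Integrable (fun x : ℝ => (x ^ 2) ^ 2) (P.map X) := by
    rw [hl]
    exact integrable_gaussianReal_of_abs_le (A := 0) (B := 1) (by fun_prop) (fun x => by
      rw [abs_of_nonneg (by positivity)]; ring_nf; rfl) v
  exact this.comp_measurable hX

variable {ι : Type*} [Fintype ι] {Y : ι → Ω → ℝ} {v : ι → ℝ≥0}

lemma measurable_chaos (hY : ∀ j, Measurable (Y j)) (a : ℝ) :
    Measurable fun ω => a * ∑ j, (Y j ω ^ 2 - v j) := by fun_prop

variable [IsProbabilityMeasure P]

lemma integral_sq_sub_mul_of_indepFun {F F' : ℝ → ℝ} {K : ℝ} (hF : ∀ w, HasDerivAt F (F' w) w)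
    (hc : Continuous F') (hK : ∀ w, |F' w| ≤ K) {X R : Ω → ℝ} (hX : Measurable X)
    (hR : Measurable R) (hXR : IndepFun X R P) {v : ℝ≥0} (hl : P.map X = gaussianReal 0 v)
    (hR2 : MemLp R 2 P) (a : ℝ) :
    ∫ ω, (X ω ^ 2 - v) * F (a * (X ω ^ 2 - v) + R ω) ∂P =
      2 * a * v * ∫ ω, X ω ^ 2 * F' (a * (X ω ^ 2 - v) + R ω) ∂P := by
  have hFc : Continuous F := continuous_iff_continuousAt.2 fun w => (hF w).continuousAt
  have hX2 := memLp_sq_of_map_eq hX hl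
  have hX3 : MemLp (fun ω => X ω ^ 2 - v) 2 P := hX2.sub (memLp_const _)
  have hK0 : 0 ≤ K := (abs_nonneg _).trans (hK 0)
  have hW : MemLp (fun ω => a * (X ω ^ 2 - v) + R ω) 2 P := (hX3.const_mul a).add hR2
  have hFW : MemLp (fun ω => F (a * (X ω ^ 2 - v) + R ω)) 2 P := by
    refine ((memLp_const |F 0|).add (hW.norm.const_mul K)).of_le (by fun_prop)
      (ae_of_all _ fun ω => ?_)
    simp only [Pi.add_apply, Real.norm_eq_abs]
    refine (abs_le_of_hasDerivAt_bound hF hK _).trans (le_abs_self _)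
  have i1 : Integrable (fun ω => (X ω ^ 2 - v) * F (a * (X ω ^ 2 - v) + R ω)) P :=
    hX3.integrable_mul hFW
  have i2 : Integrable (fun ω => X ω ^ 2 * F' (a * (X ω ^ 2 - v) + R ω)) P := by
    refine (hX2.integrable (by norm_num)).mul_bdd (c := K) (by fun_prop) (ae_of_all _ fun ω => hK _)
  have hmap : P.map (fun ω => (X ω, R ω)) = (gaussianReal 0 v).prod (P.map R) := by
    rw [← hl]
    exact (indepFun_iff_map_prod_eq_prod_map_map hX.aemeasurable hR.aemeasurable).1 hXR
  have hm : Measurable fun ω => (X ω, R ω) := hX.prodMk hR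
  have : IsProbabilityMeasure (P.map R) := Measure.isProbabilityMeasure_map hR.aemeasurable
  have g1 : Continuous fun z : ℝ × ℝ => (z.1 ^ 2 - v) * F (a * (z.1 ^ 2 - v) + z.2) := by fun_prop
  have g2 : Continuous fun z : ℝ × ℝ => z.1 ^ 2 * F' (a * (z.1 ^ 2 - v) + z.2) := by fun_prop
  have j1 := (integrable_map_measure g1.aestronglyMeasurable hm.aemeasurable).2 i1
  have j2 := (integrable_map_measure g2.aestronglyMeasurable hm.aemeasurable).2 i2
  have k1 := integral_map (μ := P) hm.aemeasurable g1.aestronglyMeasurable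
  have k2 := integral_map (μ := P) hm.aemeasurable g2.aestronglyMeasurable
  rw [hmap] at j1 j2 k1 k2
  rw [← k1, ← k2, integral_prod_symm _ j1, integral_prod_symm _ j2, ← integral_const_mul]
  refine integral_congr_ae (ae_of_all _ fun r => ?_)
  exact integral_sq_sub_mul_gaussianReal hF hc hK v a r

lemma memLp_chaos (hY : ∀ j, Measurable (Y j)) (hl : ∀ j, P.map (Y j) = gaussianReal 0 (v j))
    (a : ℝ) : MemLp (fun ω => a * ∑ j, (Y j ω ^ 2 - v j)) 2 P :=
  (memLp_finsetSum _ fun j _ => (memLp_sq_of_map_eq (hY j) (hl j)).sub (memLp_const _)).const_mul a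

/-- Stein identity for a second chaos random variable in diagonal form. -/
lemma integral_chaos_mul {F F' : ℝ → ℝ} {K : ℝ} (hF : ∀ w, HasDerivAt F (F' w) w)
    (hc : Continuous F') (hK : ∀ w, |F' w| ≤ K) (hY : ∀ j, Measurable (Y j))
    (hl : ∀ j, P.map (Y j) = gaussianReal 0 (v j)) (hi : iIndepFun Y P) (a : ℝ) :
    ∫ ω, (a * ∑ j, (Y j ω ^ 2 - v j)) * F (a * ∑ j, (Y j ω ^ 2 - v j)) ∂P =
      ∫ ω, (2 * a ^ 2 * ∑ j, v j * Y j ω ^ 2) * F' (a * ∑ j, (Y j ω ^ 2 - v j)) ∂P := by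
  classical
  have hFc : Continuous F := continuous_iff_continuousAt.2 fun w => (hF w).continuousAt
  set W : Ω → ℝ := fun ω => a * ∑ j, (Y j ω ^ 2 - v j) with hW
  have hWm : Measurable W := measurable_chaos hY a
  have hK0 : 0 ≤ K := (abs_nonneg _).trans (hK 0)
  have hW2 : MemLp W 2 P := memLp_chaos hY hl a
  have hFW : MemLp (fun ω => F (W ω)) 2 P := by
    refine ((memLp_const |F 0|).add (hW2.norm.const_mul K)).of_le (by fun_prop)
      (ae_of_all _ fun ω => ?_)
    simp only [Pi.add_apply, Real.norm_eq_abs]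
    refine (abs_le_of_hasDerivAt_bound hF hK _).trans (le_abs_self _)
  have hY2 := fun j => memLp_sq_of_map_eq (hY j) (hl j)
  have i1 : ∀ j, Integrable (fun ω => (Y j ω ^ 2 - v j) * F (W ω)) P := fun j =>
    ((hY2 j).sub (memLp_const _)).integrable_mul hFW
  have i2 : ∀ j, Integrable (fun ω => Y j ω ^ 2 * F' (W ω)) P := fun j =>
    ((hY2 j).integrable (by norm_num)).mul_bdd (c := K) (by fun_prop) (ae_of_all _ fun ω => hK _)
  have key : ∀ j, ∫ ω, (Y j ω ^ 2 - v j) * F (W ω) ∂P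
      = 2 * a * v j * ∫ ω, Y j ω ^ 2 * F' (W ω) ∂P := by
    intro j
    set g : ι → ℝ → ℝ := fun i x => x ^ 2 - v i with hg
    have hgm : ∀ i, Measurable (g i) := fun i => by fun_prop
    set R : Ω → ℝ := fun ω => a * ∑ i ∈ Finset.univ.erase j, g i (Y i ω) with hR
    have hind : IndepFun (Y j) R P := by
      have h1 := (hi.indepFun_finset₀ {j} (Finset.univ.erase j) (by simp)
        (fun i => (hY i).aemeasurable))
      have hφ : Measurable fun f : (↥({j} : Finset ι) → ℝ) => f ⟨j, by simp⟩ :=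
        measurable_pi_apply _
      have hψ : Measurable fun f : (↥(Finset.univ.erase j) → ℝ) =>
          a * ∑ i : ↥(Finset.univ.erase j), g i (f i) := by fun_prop
      have h2 := h1.comp hφ hψ
      have hRe : R = (fun f : (↥(Finset.univ.erase j) → ℝ) =>
          a * ∑ i : ↥(Finset.univ.erase j), g i (f i)) ∘
            fun ω (i : ↥(Finset.univ.erase j)) => Y i ω := by
        funext x
        exact congrArg (a * ·)
          (Finset.sum_coe_sort (Finset.univ.erase j) fun i => g i (Y i x)).symm
      rw [hRe]
      exact h2
    have hR2 : MemLp R 2 P :=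
      (memLp_finsetSum _ fun i _ => (hY2 i).sub (memLp_const _)).const_mul a
    have e : ∀ ω, W ω = a * (Y j ω ^ 2 - v j) + R ω := by
      intro ω
      simp only [hW, hR, hg]
      rw [← Finset.add_sum_erase _ _ (Finset.mem_univ j)]
      ring
    simp_rw [e]
    exact integral_sq_sub_mul_of_indepFun hF hc hK (hY j) (by fun_prop) hind (hl j) hR2 a
  have e1 : ∀ ω, W ω * F (W ω) = ∑ j, a * ((Y j ω ^ 2 - v j) * F (W ω)) := by
    intro ω
    rw [← Finset.mul_sum, ← Finset.sum_mul, ← mul_assoc]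
  have e2 : ∀ ω, (2 * a ^ 2 * ∑ j, v j * Y j ω ^ 2) * F' (W ω)
      = ∑ j, (2 * a ^ 2 * v j) * (Y j ω ^ 2 * F' (W ω)) := by
    intro ω
    rw [Finset.mul_sum, Finset.sum_mul]
    exact Finset.sum_congr rfl fun j _ => by ring
  change ∫ ω, W ω * F (W ω) ∂P = ∫ ω, (2 * a ^ 2 * ∑ j, v j * Y j ω ^ 2) * F' (W ω) ∂P
  simp_rw [e1, e2]
  rw [integral_finsetSum _ fun j _ => (i1 j).const_mul _,
    integral_finsetSum _ fun j _ => (i2 j).const_mul _]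
  refine Finset.sum_congr rfl fun j _ => ?_
  rw [integral_const_mul, integral_const_mul, key]; ring

lemma integral_abs_sub_le {T : Ω → ℝ} (hT : MemLp T 2 P) (u : ℝ) :
    ∫ ω, |T ω - u| ∂P ≤ √(Var[T; P]) + |P[T] - u| := by
  have hTi := hT.integrable (by norm_num)
  have h1 : MemLp (fun ω => T ω - P[T]) 2 P := hT.sub (memLp_const _)
  have h2 : (∫ ω, |T ω - P[T]| ∂P) ≤ √(Var[T; P]) := by
    refine Real.le_sqrt_of_sq_le ?_
    rw [variance_eq_integral hT.aemeasurable]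
    have h3 := variance_nonneg (fun ω => |T ω - P[T]|) P
    have h4 : MemLp (fun ω => |T ω - P[T]|) 2 P := h1.abs
    rw [variance_eq_sub h4] at h3
    simp only [Pi.pow_apply, sq_abs] at h3
    linarith
  calc _ ≤ ∫ ω, (|T ω - P[T]| + |P[T] - u|) ∂P := by
        refine integral_mono (hTi.sub (integrable_const _)).abs
          ((hTi.sub (integrable_const _)).abs.add (integrable_const _)) fun ω => ?_
        exact abs_sub_le _ _ _
    _ = (∫ ω, |T ω - P[T]| ∂P) + |P[T] - u| := by
        rw [integral_add (f := fun ω => |T ω - P[T]|) (hTi.sub (integrable_const _)).abs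
          (integrable_const _)]
        simp
    _ ≤ _ := by gcongr

lemma variance_sq_of_map_eq {X : Ω → ℝ} (hX : Measurable X) {v : ℝ≥0}
    (hl : P.map X = gaussianReal 0 v) : Var[fun ω => X ω ^ 2; P] = 2 * (v : ℝ) ^ 2 := by
  rw [variance_eq_sub (memLp_sq_of_map_eq hX hl)]
  have h2 := integral_comp_of_map_eq hX hl (f := fun x => x ^ 2) (by fun_prop)
  have h4 := integral_comp_of_map_eq hX hl (f := fun x => x ^ 4) (by fun_prop)
  rw [integral_sq_gaussianReal] at h2
  rw [integral_pow_four_gaussianReal] at h4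
  have e : ∫ ω, ((fun ω => X ω ^ 2) ^ 2) ω ∂P = ∫ ω, X ω ^ 4 ∂P :=
    integral_congr_ae (ae_of_all _ fun ω => by simp only [Pi.pow_apply]; ring)
  rw [e, h4, h2]; ring

/-- Wasserstein bound between a diagonal second chaos variable and a centred Gaussian law. -/
lemma abs_integral_chaos_sub_le (hY : ∀ j, Measurable (Y j))
    (hl : ∀ j, P.map (Y j) = gaussianReal 0 (v j)) (hi : iIndepFun Y P) (a : ℝ) {u : ℝ≥0}
    (hu : 0 < u) {h : ℝ → ℝ} (hh : LipschitzWith 1 h) :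
    |(∫ x, h x ∂P.map fun ω => a * ∑ j, (Y j ω ^ 2 - v j)) - ∫ x, h x ∂gaussianReal 0 u| ≤
      3 * √(4 * Real.pi) / √u *
        (√(8 * a ^ 4 * ∑ j, (v j : ℝ) ^ 4) + |2 * a ^ 2 * ∑ j, (v j : ℝ) ^ 2 - u|) := by
  obtain ⟨F, F', hF, hc, hK, hS⟩ := exists_stein_solution hh hu
  set W : Ω → ℝ := fun ω => a * ∑ j, (Y j ω ^ 2 - v j) with hW
  set T : Ω → ℝ := fun ω => 2 * a ^ 2 * ∑ j, v j * Y j ω ^ 2 with hT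
  set K := 3 * √(4 * Real.pi) / √u with hKdef
  have hFc : Continuous F := continuous_iff_continuousAt.2 fun w => (hF w).continuousAt
  have hWm : Measurable W := measurable_chaos hY a
  have hW2 : MemLp W 2 P := memLp_chaos hY hl a
  have hY2 := fun j => memLp_sq_of_map_eq (hY j) (hl j)
  have hT2 : MemLp T 2 P := (memLp_finsetSum _ fun j _ => (hY2 j).const_mul _).const_mul _
  have hTi := hT2.integrable (by norm_num)
  have hFW : MemLp (fun ω => F (W ω)) 2 P := by
    refine ((memLp_const |F 0|).add (hW2.norm.const_mul K)).of_le (by fun_prop)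
      (ae_of_all _ fun ω => ?_)
    simp only [Pi.add_apply, Real.norm_eq_abs]
    refine (abs_le_of_hasDerivAt_bound hF hK _).trans (le_abs_self _)
  have hF'i : Integrable (fun ω => F' (W ω)) P :=
    (integrable_const K).mono' (by fun_prop) (ae_of_all _ fun ω => hK _)
  have hTF : Integrable (fun ω => T ω * F' (W ω)) P :=
    hTi.mul_bdd (c := K) (by fun_prop) (ae_of_all _ fun ω => hK _)
  have hWF : Integrable (fun ω => W ω * F (W ω)) P := hW2.integrable_mul hFW
  have hhi : Integrable (fun ω => h (W ω)) P := by
    refine ((integrable_const (∫ x, h x ∂gaussianReal 0 u)).add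
      ((hF'i.const_mul (u : ℝ)).sub hWF)).congr (ae_of_all _ fun ω => ?_)
    have := hS (W ω)
    simp only [Pi.add_apply, Pi.sub_apply]; linarith
  have hST := integral_chaos_mul hF hc hK hY hl hi a
  have e : (∫ x, h x ∂P.map W) - ∫ x, h x ∂gaussianReal 0 u
      = ∫ ω, (u - T ω) * F' (W ω) ∂P := by
    rw [integral_map hWm.aemeasurable hh.continuous.aestronglyMeasurable]
    have e1 : (∫ ω, h (W ω) ∂P) - ∫ x, h x ∂gaussianReal 0 u
        = ∫ ω, (h (W ω) - ∫ x, h x ∂gaussianReal 0 u) ∂P := by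
      rw [integral_sub hhi (integrable_const _)]; simp
    rw [e1]
    simp_rw [← hS, sub_mul]
    rw [integral_sub (hF'i.const_mul _) hWF, integral_sub (hF'i.const_mul _) hTF]
    exact congrArg _ hST
  have hvar : Var[T; P] = 8 * a ^ 4 * ∑ j, (v j : ℝ) ^ 4 := by
    have hp : Set.Pairwise (↑(Finset.univ : Finset ι))
        fun i j => IndepFun (fun ω => v i * Y i ω ^ 2) (fun ω => v j * Y j ω ^ 2) P :=
      fun i _ j _ hij => (hi.indepFun hij).comp (φ := fun x : ℝ => (v i : ℝ) * x ^ 2)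
        (ψ := fun x : ℝ => (v j : ℝ) * x ^ 2) (by fun_prop) (by fun_prop)
    have h1 := IndepFun.variance_sum (fun j _ => (hY2 j).const_mul (v j : ℝ)) hp
    have h2 : T = fun ω => 2 * a ^ 2 * (∑ j, fun ω => v j * Y j ω ^ 2) ω := by
      funext ω; simp [hT]
    rw [h2, variance_const_mul, h1, Finset.mul_sum, Finset.mul_sum]
    refine Finset.sum_congr rfl fun j _ => ?_
    rw [variance_const_mul, variance_sq_of_map_eq (hY j) (hl j)]; ring
  have hmean : P[T] = 2 * a ^ 2 * ∑ j, (v j : ℝ) ^ 2 := by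
    simp only [hT]
    rw [integral_const_mul, integral_finsetSum _ fun j _ =>
      ((hY2 j).integrable (by norm_num)).const_mul _]
    congr 1
    refine Finset.sum_congr rfl fun j _ => ?_
    rw [integral_const_mul, integral_comp_of_map_eq (hY j) (hl j) (f := fun x => x ^ 2)
      (by fun_prop), integral_sq_gaussianReal]; ring
  have hfin := integral_abs_sub_le hT2 u
  rw [hvar, hmean] at hfin
  rw [e, ← Real.norm_eq_abs]
  have hK0 : 0 ≤ K := (abs_nonneg _).trans (hK 0)
  calc _ ≤ ∫ ω, K * |T ω - u| ∂P := by
        refine norm_integral_le_of_norm_le ((hTi.sub (integrable_const _)).abs.const_mul K)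
          (ae_of_all _ fun ω => ?_)
        rw [Real.norm_eq_abs, abs_mul, abs_sub_comm, mul_comm]
        gcongr
        exact hK _
    _ ≤ _ := by
        rw [integral_const_mul]; gcongr

end ChaosStein

lemma log_one_sub_mul_I (x : ℝ) :
    Complex.log (1 - x * Complex.I) =
      ((Real.log (1 + x ^ 2) / 2 : ℝ) : ℂ) - (Real.arctan x : ℝ) * Complex.I := by
  have hn : ‖1 - x * Complex.I‖ = √(1 + x ^ 2) := by
    rw [Complex.norm_def, Complex.normSq_apply]
    congr 1
    simp
    ring
  have ha : (1 - x * Complex.I).arg = -Real.arctan x := by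
    rw [Complex.arg_of_re_nonneg (by simp), hn, Real.arctan_eq_arcsin, ← Real.arcsin_neg]
    simp [neg_div]
  rw [Complex.log, hn, ha, Real.log_sqrt (by positivity)]
  push_cast
  ring

/-- Characteristic function of a centered squared Gaussian variable. -/
lemma integral_cexp_sq_sub_gaussianReal (v : ℝ≥0) (s : ℝ) :
    ∫ y, Complex.exp (s * (y ^ 2 - v : ℝ) * Complex.I) ∂gaussianReal 0 v =
      Complex.exp (((-(Real.log (1 + (2 * s * v) ^ 2) / 4) : ℝ) : ℂ) +
        ((Real.arctan (2 * s * v) - 2 * s * v) / 2 : ℝ) * Complex.I) := by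
  rcases eq_or_ne v 0 with rfl | hv
  · simp
  have hv0 : (0 : ℝ) < v := by positivity
  set x : ℝ := 2 * s * v with hx
  have hne : (1 - x * Complex.I) ≠ 0 := fun h => by simpa using congrArg Complex.re h
  set b : ℂ := (1 - x * Complex.I) / (2 * v : ℝ) with hb
  have hbre : 0 < b.re := by
    rw [hb, Complex.div_ofReal_re]
    simp [hv0]
  have h1 : ∀ y : ℝ, gaussianPDFReal 0 v y • Complex.exp (s * (y ^ 2 - v : ℝ) * Complex.I) =
      ((√(2 * Real.pi * v))⁻¹ : ℝ) * Complex.exp (-(s * v) * Complex.I) *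
        Complex.exp (-b * y ^ 2) := by
    intro y
    have hvc : (v : ℂ) ≠ 0 := by exact_mod_cast hv
    rw [gaussianPDFReal, Complex.real_smul, Complex.ofReal_mul, Complex.ofReal_exp,
      mul_assoc _ (Complex.exp _) (Complex.exp _), mul_assoc _ (Complex.exp _) (Complex.exp _), ← Complex.exp_add, ← Complex.exp_add]
    congr 2
    rw [hb, hx]
    push_cast
    field_simp
    ring
  have h2 : (Real.pi : ℂ) / b = (2 * Real.pi * v : ℝ) * (1 - x * Complex.I)⁻¹ := by
    rw [hb]
    push_cast
    have hvc : (v : ℂ) ≠ 0 := by exact_mod_cast hv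
    field_simp
  have harg : (1 - x * Complex.I).arg ≠ Real.pi := by
    intro h
    rw [Complex.arg_eq_pi_iff] at h
    simpa using h.1.trans one_pos
  have h3 : ((Real.pi : ℂ) / b) ^ (1 / 2 : ℂ) = (√(2 * Real.pi * v) : ℝ) *
      Complex.exp (-(Complex.log (1 - x * Complex.I)) / 2) := by
    have hpv : 0 < 2 * Real.pi * v := by positivity
    rw [h2, Complex.cpow_def_of_ne_zero (mul_ne_zero (by exact_mod_cast hpv.ne') (inv_ne_zero hne)),
      Complex.log_ofReal_mul hpv (inv_ne_zero hne), Complex.log_inv _ harg]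
    rw [add_mul, Complex.exp_add]
    congr 1
    · rw [Real.sqrt_eq_rpow, Real.rpow_def_of_pos hpv]
      push_cast
      rfl
    · congr 1
      ring
  rw [integral_gaussianReal_eq_integral_smul hv]
  simp_rw [h1]
  rw [integral_const_mul, integral_gaussian_complex hbre, h3, log_one_sub_mul_I]
  have hs : ((√(2 * Real.pi * v))⁻¹ : ℝ) * ((√(2 * Real.pi * v) : ℝ) : ℂ) = 1 := by
    have : √(2 * Real.pi * v) ≠ 0 := by positivity
    rw [← Complex.ofReal_mul, inv_mul_cancel₀ this, Complex.ofReal_one]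
  rw [mul_assoc, mul_left_comm (Complex.exp _), ← mul_assoc, hs, one_mul, ← Complex.exp_add]
  congr 1
  rw [hx]
  push_cast
  ring

lemma sub_arctan_le {x : ℝ} (hx : 0 ≤ x) : x - Real.arctan x ≤ x ^ 3 / 3 := by
  have hm : MonotoneOn (fun y : ℝ => y ^ 3 / 3 - (y - Real.arctan y)) (Set.Ici 0) := by
    refine monotoneOn_of_hasDerivWithinAt_nonneg (f' := fun y => y ^ 2 - (1 - 1 / (1 + y ^ 2)))
      (convex_Ici 0) (by fun_prop) (fun y _ => ?_) fun y _ => ?_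
    · refine HasDerivAt.hasDerivWithinAt ?_
      have := ((hasDerivAt_pow 3 y).div_const 3).sub
        ((hasDerivAt_id y).sub (Real.hasDerivAt_arctan y))
      exact this.congr_deriv (by norm_num)
    · have h : y ^ 2 - (1 - 1 / (1 + y ^ 2)) = y ^ 4 / (1 + y ^ 2) := by field_simp; ring
      rw [h]
      positivity
  simpa using hm Set.self_mem_Ici hx hx

lemma le_sub_arctan {x : ℝ} (hx : 0 ≤ x) (hx1 : x ≤ 1) : x ^ 3 / 6 ≤ x - Real.arctan x := by
  have hm : MonotoneOn (fun y : ℝ => y - Real.arctan y - y ^ 3 / 6) (Set.Icc 0 1) := by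
    refine monotoneOn_of_hasDerivWithinAt_nonneg (f' := fun y => 1 - 1 / (1 + y ^ 2) - y ^ 2 / 2)
      (convex_Icc 0 1) (by fun_prop) (fun y _ => ?_) fun y hy => ?_
    · refine HasDerivAt.hasDerivWithinAt ?_
      have := ((hasDerivAt_id y).sub (Real.hasDerivAt_arctan y)).sub
        ((hasDerivAt_pow 3 y).div_const 6)
      exact this.congr_deriv (by norm_num; ring)
    · rw [interior_Icc] at hy
      have h : 1 - 1 / (1 + y ^ 2) - y ^ 2 / 2 = y ^ 2 * (1 - y ^ 2) / (2 * (1 + y ^ 2)) := by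
        field_simp; ring
      rw [h]
      have : 0 ≤ 1 - y ^ 2 := by nlinarith [hy.1, hy.2]
      positivity
  simpa using hm (Set.left_mem_Icc.2 zero_le_one) ⟨hx, hx1⟩ hx

section ChaosSine

variable {Ω : Type*} {mΩ : MeasurableSpace Ω} {P : Measure Ω} [IsProbabilityMeasure P]
variable {ι : Type*} [Fintype ι] {Y : ι → Ω → ℝ} {v : ι → ℝ≥0}

lemma integral_sin_chaos (hY : ∀ j, Measurable (Y j))
    (hl : ∀ j, P.map (Y j) = gaussianReal 0 (v j)) (hi : iIndepFun Y P) (s : ℝ) :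
    ∫ ω, Real.sin (s * ∑ j, (Y j ω ^ 2 - v j)) ∂P =
      -(Real.exp (-∑ j, Real.log (1 + (2 * s * v j) ^ 2) / 4) *
        Real.sin (∑ j, (2 * s * v j - Real.arctan (2 * s * v j)) / 2)) := by
  have h1 : ∫ ω, Complex.exp ((s * ∑ j, (Y j ω ^ 2 - v j) : ℝ) * Complex.I) ∂P =
      Complex.exp ((-∑ j, Real.log (1 + (2 * s * v j) ^ 2) / 4 : ℝ) +
        ((-∑ j, (2 * s * v j - Real.arctan (2 * s * v j)) / 2 : ℝ) : ℂ) * Complex.I) := by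
    have e : ∀ ω, Complex.exp ((s * ∑ j, (Y j ω ^ 2 - v j) : ℝ) * Complex.I) =
        ∏ j, Complex.exp (s * (Y j ω ^ 2 - v j : ℝ) * Complex.I) := by
      intro ω
      rw [← Complex.exp_sum, ← Finset.sum_mul, ← Finset.mul_sum]
      push_cast
      rfl
    simp_rw [e]
    have hc : ∀ j, Continuous fun y : ℝ => Complex.exp (s * (y ^ 2 - v j : ℝ) * Complex.I) :=
      fun j => by fun_prop
    rw [hi.integral_fun_prod_comp (fun j => (hY j).aemeasurable)
      (f := fun j y => Complex.exp (s * (y ^ 2 - v j : ℝ) * Complex.I))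
      (fun j => (hc j).aestronglyMeasurable)]
    have e2 : ∀ j, ∫ ω, Complex.exp (s * (Y j ω ^ 2 - v j : ℝ) * Complex.I) ∂P =
        ∫ y, Complex.exp (s * (y ^ 2 - v j : ℝ) * Complex.I) ∂gaussianReal 0 (v j) := fun j => by
      rw [← hl j, integral_map (hY j).aemeasurable (hc j).aestronglyMeasurable]
    simp_rw [e2, integral_cexp_sq_sub_gaussianReal]
    rw [← Complex.exp_sum]
    congr 1
    push_cast
    rw [Finset.sum_add_distrib, ← Finset.sum_mul, ← Finset.sum_neg_distrib,
      ← Finset.sum_neg_distrib]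
    congr 2
    refine Finset.sum_congr rfl fun j _ => ?_
    ring
  have hint : Integrable (fun ω => Complex.exp ((s * ∑ j, (Y j ω ^ 2 - v j) : ℝ) * Complex.I)) P := by
    refine Integrable.of_bound (C := 1) ?_ (ae_of_all _ fun ω => ?_)
    · exact Measurable.aestronglyMeasurable (by fun_prop)
    · rw [Complex.norm_exp_ofReal_mul_I]
  have h2 := Complex.imCLM.integral_comp_comm hint
  simp only [Complex.imCLM_apply, Complex.exp_ofReal_mul_I_im] at h2
  rw [h2, h1, Complex.exp_add, ← Complex.ofReal_exp, Complex.im_ofReal_mul, Complex.exp_ofReal_mul_I_im,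
    Real.sin_neg, mul_neg]

/-- The integral of a rescaled sine detects the third cumulant of a diagonal second chaos. -/
lemma le_abs_integral_sin_chaos (hY : ∀ j, Measurable (Y j))
    (hl : ∀ j, P.map (Y j) = gaussianReal 0 (v j)) (hi : iIndepFun Y P) {Λ m : ℝ} (hΛ : 0 < Λ)
    (hv : ∀ j, (v j : ℝ) ≤ Λ) (hn : 0 < Fintype.card ι)
    (hs : ∑ j, (v j : ℝ) = Fintype.card ι * m) :
    Λ / 16 * (m / Λ) ^ 3 / √(Fintype.card ι) ≤
      |∫ ω, 2 * Λ * Real.sin ((2 * Λ)⁻¹ *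
        ((√(Fintype.card ι))⁻¹ * ∑ j, (Y j ω ^ 2 - v j))) ∂P| := by
  set n : ℝ := (Fintype.card ι : ℝ) with hn_def
  have hn1 : 1 ≤ n := by rw [hn_def]; exact_mod_cast hn
  set q : ℝ := √n with hq
  have hq1 : 1 ≤ q := Real.one_le_sqrt.2 hn1
  have hqq : q ^ 2 = n := Real.sq_sqrt (by linarith)
  have hq0 : 0 < q := by linarith
  set s : ℝ := (2 * Λ)⁻¹ * q⁻¹ with hsdef
  set x : ι → ℝ := fun j => 2 * s * v j with hx
  have hx0 : ∀ j, 0 ≤ x j := fun j => by positivity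
  have hxe : ∀ j, x j = v j / Λ / q := fun j => by
    simp only [hx, hsdef]; field_simp
  have hxq : ∀ j, x j ≤ q⁻¹ := fun j => by
    rw [hxe, div_eq_mul_inv]
    exact mul_le_of_le_one_left (by positivity) ((div_le_one hΛ).2 (hv j))
  have hx1 : ∀ j, x j ≤ 1 := fun j => (hxq j).trans (inv_le_one_of_one_le₀ hq1)
  have hx2 : ∑ j, x j ^ 2 ≤ 1 := by
    calc ∑ j, x j ^ 2 ≤ ∑ _j : ι, (q⁻¹) ^ 2 :=
          Finset.sum_le_sum fun j _ => pow_le_pow_left₀ (hx0 j) (hxq j) 2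
      _ = 1 := by
          rw [Finset.sum_const, nsmul_eq_mul, Finset.card_univ, ← hn_def, inv_pow, hqq]
          exact mul_inv_cancel₀ (by linarith)
  have hx3 : ∑ j, x j ^ 3 ≤ 1 := by
    refine le_trans (Finset.sum_le_sum fun j _ => ?_) hx2
    exact pow_le_pow_of_le_one (hx0 j) (hx1 j) (by norm_num)
  have hlow : (m / Λ) ^ 3 / q ≤ ∑ j, x j ^ 3 := by
    have h := pow_sum_div_card_le_sum_pow (s := Finset.univ) (f := x) (fun j _ => hx0 j) 2
    refine le_trans (le_of_eq ?_) h
    have : ∑ j, x j = n * m / Λ / q := by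
      simp_rw [hxe]
      rw [← Finset.sum_div, ← Finset.sum_div, hs]
    rw [this, Finset.card_univ, ← hn_def, ← hqq]
    field_simp
    norm_num
    field_simp
  set A : ℝ := ∑ j, Real.log (1 + x j ^ 2) / 4 with hA
  set B : ℝ := ∑ j, (x j - Real.arctan (x j)) / 2 with hB
  have hA1 : A ≤ 1 / 4 := by
    have : A ≤ ∑ j, x j ^ 2 / 4 := by
      refine Finset.sum_le_sum fun j _ => ?_
      have := Real.log_le_sub_one_of_pos (show 0 < 1 + x j ^ 2 by positivity)
      linarith
    rw [← Finset.sum_div] at this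
    linarith
  have hB1 : B ≤ 1 / 6 := by
    have : B ≤ ∑ j, x j ^ 3 / 6 := by
      refine Finset.sum_le_sum fun j _ => ?_
      have := sub_arctan_le (hx0 j)
      linarith
    rw [← Finset.sum_div] at this
    linarith
  have hB0 : (∑ j, x j ^ 3) / 12 ≤ B := by
    rw [Finset.sum_div]
    refine Finset.sum_le_sum fun j _ => ?_
    have := le_sub_arctan (hx0 j) (hx1 j)
    linarith
  have hBn : 0 ≤ B := le_trans (by positivity) hB0
  have hsin : B / 2 ≤ Real.sin B := by
    have h1 := Real.mul_le_sin hBn (by linarith [Real.pi_gt_three])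
    have h2 : 1 / 2 * B ≤ 2 / Real.pi * B := by
      refine mul_le_mul_of_nonneg_right ?_ hBn
      rw [div_le_div_iff₀ (by norm_num) Real.pi_pos]
      linarith [Real.pi_le_four]
    linarith
  have hexp : 3 / 4 ≤ Real.exp (-A) := by linarith [Real.add_one_le_exp (-A)]
  have hval : ∫ ω, 2 * Λ * Real.sin ((2 * Λ)⁻¹ * (q⁻¹ * ∑ j, (Y j ω ^ 2 - v j))) ∂P =
      -(2 * Λ * (Real.exp (-A) * Real.sin B)) := by
    simp_rw [← mul_assoc (2 * Λ)⁻¹ q⁻¹]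
    rw [integral_const_mul, integral_sin_chaos hY hl hi]
    ring
  have hS : 0 ≤ Real.sin B := le_trans (by positivity) hsin
  rw [hval, abs_neg, abs_of_nonneg (by positivity)]
  have h5 : (m / Λ) ^ 3 / q / 32 ≤ Real.exp (-A) * Real.sin B := by
    calc (m / Λ) ^ 3 / q / 32 ≤ 3 / 4 * (B / 2) := by linarith
      _ ≤ _ := mul_le_mul hexp hsin (by positivity) (by positivity)
  calc Λ / 16 * (m / Λ) ^ 3 / q = 2 * Λ * ((m / Λ) ^ 3 / q / 32) := by ring
    _ ≤ _ := by gcongr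

end ChaosSine

lemma integral_eq_zero_gaussianReal_of_odd {h : ℝ → ℝ} (hh : ∀ x, h (-x) = -h x) (u : ℝ≥0) :
    ∫ x, h x ∂gaussianReal 0 u = 0 := by
  have h1 : (gaussianReal 0 u).map (fun x => -x) = gaussianReal 0 u := by
    simpa using gaussianReal_map_neg (μ := 0) (v := u)
  have h2 : ∫ x, h x ∂gaussianReal 0 u = -∫ x, h x ∂gaussianReal 0 u := by
    have h3 := (MeasurableEquiv.neg ℝ).measurableEmbedding.integral_map (μ := gaussianReal 0 u) h
    have h4 : ∫ x, h (-x) ∂gaussianReal 0 u = -∫ x, h x ∂gaussianReal 0 u := by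
      simp only [hh, integral_neg]
    rw [← h4]
    exact (congrArg (fun μ => ∫ x, h x ∂μ) h1).symm.trans h3
  linarith

lemma lipschitzWith_mul_sin {b : ℝ} (hb : 0 < b) :
    LipschitzWith 1 fun x => b * Real.sin (b⁻¹ * x) := by
  refine LipschitzWith.of_dist_le_mul fun x y => ?_
  rw [Real.dist_eq, Real.dist_eq, ← mul_sub, abs_mul, abs_of_pos hb, NNReal.coe_one, one_mul]
  have h := Real.abs_sin_sub_sin_le (b⁻¹ * x) (b⁻¹ * y)
  rw [← mul_sub, abs_mul, abs_of_pos (inv_pos.2 hb)] at h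
  calc b * |Real.sin (b⁻¹ * x) - Real.sin (b⁻¹ * y)| ≤ b * (b⁻¹ * |x - y|) := by gcongr
    _ = |x - y| := mul_inv_cancel_left₀ hb.ne' _

section Diagonalization

variable {ι : Type*} [Fintype ι] [DecidableEq ι]

open Matrix in
/-- Orthogonal diagonalization of a real symmetric matrix, with Gershgorin's bound. -/
lemma exists_orthogonal_diagonalization {C : Matrix ι ι ℝ} (hC : C.IsHermitian) :
    ∃ (O : Matrix ι ι ℝ) (d : ι → ℝ), O * Oᵀ = 1 ∧ Oᵀ * C * O = diagonal d ∧
      ∀ j, ∃ k, d j ≤ ∑ i, |C k i| := by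
  refine ⟨hC.eigenvectorUnitary, hC.eigenvalues, ?_, ?_, fun j => ?_⟩
  · have := Unitary.coe_mul_star_self hC.eigenvectorUnitary
    rwa [Unitary.coe_star, star_eq_conjTranspose, conjTranspose_eq_transpose_of_trivial] at this
  · have := hC.conjStarAlgAut_star_eigenvectorUnitary
    rw [Unitary.conjStarAlgAut_apply, Unitary.coe_star, star_star, star_eq_conjTranspose,
      conjTranspose_eq_transpose_of_trivial] at this
    exact this
  · have hj : Module.End.HasEigenvalue (toLin' C) (hC.eigenvalues j) := by
      rw [Module.End.hasEigenvalue_iff_mem_spectrum, spectrum_toLin']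
      exact hC.eigenvalues_mem_spectrum_real j
    obtain ⟨k, hk⟩ := eigenvalue_mem_ball hj
    refine ⟨k, ?_⟩
    rw [Metric.mem_closedBall, Real.dist_eq] at hk
    rw [← Finset.add_sum_erase _ _ (Finset.mem_univ k)]
    have h1 := le_abs_self (hC.eigenvalues j - C k k)
    have h2 := le_abs_self (C k k)
    simp only [Real.norm_eq_abs] at hk
    linarith

variable {Ω : Type*} {mΩ : MeasurableSpace Ω} {P : Measure Ω}
variable {X : ι → Ω → ℝ} {C : Matrix ι ι ℝ}

lemma memLp_two_of_map_eq {X : Ω → ℝ} (hX : Measurable X) {v : ℝ≥0}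
    (hl : P.map X = gaussianReal 0 v) : MemLp X 2 P := by
  have h : MemLp id 2 (P.map X) := hl ▸ memLp_id_gaussianReal 2
  exact h.comp_of_map hX.aemeasurable

omit [DecidableEq ι] in
lemma integral_sum_mul_sum (hX : ∀ i, MemLp (X i) 2 P)
    (hC : ∀ i j, ∫ ω, X i ω * X j ω ∂P = C i j) (a b : ι → ℝ) :
    ∫ ω, (∑ i, a i * X i ω) * (∑ i, b i * X i ω) ∂P = ∑ i, ∑ j, a i * C i j * b j := by
  have h : ∀ ω, (∑ i, a i * X i ω) * (∑ i, b i * X i ω) =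
      ∑ i, ∑ j, a i * b j * (X i ω * X j ω) := by
    intro ω
    rw [Finset.sum_mul_sum]
    exact Finset.sum_congr rfl fun i _ => Finset.sum_congr rfl fun j _ => by ring
  have hint : ∀ i j, Integrable (fun ω => a i * b j * (X i ω * X j ω)) P := fun i j =>
    ((hX i).integrable_mul (hX j)).const_mul _
  simp_rw [h]
  rw [integral_finsetSum _ fun i _ => integrable_finsetSum _ fun j _ => hint i j]
  refine Finset.sum_congr rfl fun i _ => ?_
  rw [integral_finsetSum _ fun j _ => hint i j]
  refine Finset.sum_congr rfl fun j _ => ?_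
  rw [integral_const_mul, hC]
  ring

open Matrix in
/-- A centered Gaussian vector can be rotated into a vector with independent coordinates. -/
lemma exists_independent_rotation [IsProbabilityMeasure P] (hX : ∀ i, Measurable (X i))
    (hl : ∀ a : ι → ℝ, ∃ v : ℝ≥0, P.map (fun ω => ∑ i, a i * X i ω) = gaussianReal 0 v)
    (hC : ∀ i j, ∫ ω, X i ω * X j ω ∂P = C i j) {Λ : ℝ} (hΛ : ∀ i, ∑ j, |C i j| ≤ Λ) :
    ∃ (Y : ι → Ω → ℝ) (v : ι → ℝ≥0), (∀ j, Measurable (Y j)) ∧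
      (∀ j, P.map (Y j) = gaussianReal 0 (v j)) ∧ iIndepFun Y P ∧
      (∀ ω, ∑ j, Y j ω ^ 2 = ∑ i, X i ω ^ 2) ∧ (∀ j, (v j : ℝ) ≤ Λ) ∧
      ∑ j, (v j : ℝ) = ∑ i, C i i ∧ ∑ j, (v j : ℝ) ^ 2 = ∑ i, ∑ j, C i j ^ 2 := by
  have hX2 : ∀ i, MemLp (X i) 2 P := by
    intro i
    obtain ⟨v, hv⟩ := hl (Pi.single i 1)
    refine memLp_two_of_map_eq (hX i) (v := v) ?_
    rw [← hv]
    congr 1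
    funext ω
    simp [Pi.single_apply]
  have hCs : ∀ i j, C j i = C i j := fun i j => by
    rw [← hC, ← hC]
    exact integral_congr_ae (ae_of_all _ fun ω => mul_comm _ _)
  have hCh : C.IsHermitian := Matrix.ext fun i j => by simpa using hCs i j
  obtain ⟨O, d, hO, hd, hb⟩ := exists_orthogonal_diagonalization hCh
  set Y : ι → Ω → ℝ := fun j ω => ∑ i, O i j * X i ω with hYdef
  have hYm : ∀ j, Measurable (Y j) := fun j => by fun_prop
  choose v hv using fun j => hl fun i => O i j
  have hlY : ∀ j, P.map (Y j) = gaussianReal 0 (v j) := hv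
  have hcov : ∀ j k, ∫ ω, Y j ω * Y k ω ∂P = diagonal d j k := by
    intro j k
    rw [← hd, integral_sum_mul_sum hX2 hC, mul_apply]
    simp_rw [mul_apply, Finset.sum_mul, transpose_apply]
    exact Finset.sum_comm
  have hlin : ∀ (t : ι → ℝ) (ω : Ω),
      ∑ j, t j * Y j ω = ∑ i, (∑ j, t j * O i j) * X i ω := by
    intro t ω
    simp only [hYdef, Finset.mul_sum, Finset.sum_mul]
    rw [Finset.sum_comm]
    exact Finset.sum_congr rfl fun i _ => Finset.sum_congr rfl fun j _ => by ring
  have hvar : ∀ {W : Ω → ℝ} {w : ℝ≥0}, Measurable W → P.map W = gaussianReal 0 w →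
      (w : ℝ) = ∫ ω, W ω * W ω ∂P := by
    intro W w hW hw
    rw [← integral_sq_gaussianReal w, ← integral_comp_of_map_eq hW hw (by fun_prop)]
    exact integral_congr_ae (ae_of_all _ fun ω => sq _)
  have hvd : ∀ j, (v j : ℝ) = d j := fun j => by
    rw [hvar (hYm j) (hlY j), hcov, diagonal_apply_eq]
  have hY2 : ∀ j, MemLp (Y j) 2 P := fun j => memLp_two_of_map_eq (hYm j) (hlY j)
  refine ⟨Y, v, hYm, hlY, ?_, fun ω => ?_, fun j => ?_, ?_, ?_⟩
  · rw [iIndepFun_iff_charFun_pi fun j => (hYm j).aemeasurable]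
    intro t
    have hm : Measurable fun ω => WithLp.toLp 2 fun j => Y j ω :=
      (WithLp.measurable_toLp 2 _).comp (measurable_pi_lambda _ hYm)
    obtain ⟨w, hw⟩ := hl fun i => ∑ j, t j * O i j
    have hw2 : P.map (fun ω => ∑ j, t j * Y j ω) = gaussianReal 0 w := by
      rw [← hw]
      congr 1
      funext ω
      exact hlin t ω
    have hwv : (w : ℝ) = ∑ j, t j ^ 2 * v j := by
      rw [hvar (by fun_prop) hw2, integral_sum_mul_sum hY2 hcov]
      refine Finset.sum_congr rfl fun i _ => ?_
      rw [Finset.sum_eq_single i (fun j _ hj => by simp [diagonal_apply_ne' _ hj]) (by simp),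
        diagonal_apply_eq, hvd]
      ring
    have h1 : charFun (P.map fun ω => WithLp.toLp 2 fun j => Y j ω) t =
        charFun (P.map fun ω => ∑ j, t j * Y j ω) 1 := by
      rw [charFun_apply, charFun_apply, integral_map hm.aemeasurable (by fun_prop),
        integral_map (by fun_prop) (by fun_prop)]
      refine integral_congr_ae (ae_of_all _ fun ω => ?_)
      simp [PiLp.inner_apply]
    rw [h1, hw2, charFun_gaussianReal]
    simp_rw [hlY, charFun_gaussianReal]
    rw [← Complex.exp_sum]
    congr 1
    have : ((w : ℝ) : ℂ) = ∑ j, (t j : ℂ) ^ 2 * (v j : ℝ) := by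
      rw [hwv]; push_cast; rfl
    simp only [Complex.ofReal_zero, mul_zero, zero_mul, zero_sub, Complex.ofReal_one, one_pow,
      mul_one, this, Finset.sum_div, Finset.sum_neg_distrib]
    congr 1
    refine Finset.sum_congr rfl fun j _ => ?_
    ring
  · have h1 : ∀ j, Y j ω = (Oᵀ *ᵥ fun i => X i ω) j := fun j => rfl
    have h2 : (Oᵀ *ᵥ fun i => X i ω) ⬝ᵥ (Oᵀ *ᵥ fun i => X i ω) =
        (fun i => X i ω) ⬝ᵥ fun i => X i ω := by
      rw [dotProduct_mulVec, vecMul_transpose, mulVec_mulVec, hO, one_mulVec]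
    simp only [h1, sq]
    exact h2
  · obtain ⟨k, hk⟩ := hb j
    rw [hvd]
    exact hk.trans (hΛ k)
  · have h := congrArg trace hd
    rw [trace_mul_comm, ← mul_assoc, hO, one_mul, trace_diagonal] at h
    simp_rw [hvd, ← h]
    rfl
  · have h : trace (C * C) = trace (diagonal d * diagonal d) := by
      have : diagonal d * diagonal d = Oᵀ * (C * C * O) := by
        rw [← hd]
        simp only [mul_assoc]
        rw [← mul_assoc O Oᵀ, hO, one_mul]
      rw [this, trace_mul_comm Oᵀ, mul_assoc (C * C), hO, mul_one]
    rw [diagonal_mul_diagonal, trace_diagonal] at h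
    simp_rw [hvd, sq, ← h, trace, diag, mul_apply]
    refine Finset.sum_congr rfl fun i _ => Finset.sum_congr rfl fun j _ => ?_
    rw [hCs i j]

end Diagonalization

/-- If the second difference of a null sequence is eventually nonnegative, then it is summable
against linear weights. -/
lemma summable_mul_abs_of_second_difference_nonneg {q ρ : ℕ → ℝ}
    (hq : Tendsto q atTop (nhds 0)) (hρ : ∀ k, ρ (k + 1) = 2 * q (k + 1) - q (k + 2) - q k)
    {K : ℕ} (hs : ∀ k, K ≤ k → 0 ≤ ρ k) : Summable fun k : ℕ => ((k : ℝ) + 1) * |ρ k| := by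
  set d : ℕ → ℝ := fun k => q k - q (k + 1) with hd
  have hdρ : ∀ k, ρ (k + 1) = d (k + 1) - d k := fun k => by rw [hρ, hd]; ring
  have hd0 : Tendsto d atTop (nhds 0) := by
    simpa using hq.sub ((tendsto_add_atTop_iff_nat 1).2 hq)
  have hdneg : ∀ N, d (N + K) ≤ 0 := by
    have hmono : Monotone fun N => d (N + K) := monotone_nat_of_le_succ fun N => by
      have h1 := hs (N + K + 1) (by omega)
      have h2 := hdρ (N + K)
      have h3 : N + 1 + K = N + K + 1 := by omega
      rw [h3]
      linarith
    exact fun N => hmono.ge_of_tendsto ((tendsto_add_atTop_iff_nat K).2 hd0) N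
  have habel : ∀ N : ℕ, ∑ k ∈ Finset.range N, ((k + K : ℕ) + 1 : ℝ) * ρ (k + K + 1) =
      (N + K : ℕ) * d (N + K) - K * d K - q K + q (N + K) := by
    intro N
    induction N with
    | zero => simp
    | succ N ih =>
      rw [Finset.sum_range_succ, ih, hdρ]
      have h3 : N + 1 + K = N + K + 1 := by omega
      rw [h3]
      have h4 : d (N + K) = q (N + K) - q (N + K + 1) := rfl
      push_cast
      linear_combination h4
  obtain ⟨M, hM⟩ := hq.abs.bddAbove_range
  have hMq : ∀ N, q N ≤ M := fun N => (le_abs_self _).trans (hM ⟨N, rfl⟩)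
  have hsum : Summable fun k : ℕ => ((k + K : ℕ) + 1 : ℝ) * |ρ (k + K + 1)| := by
    refine summable_of_sum_range_le (c := -(K * d K) - q K + M) (fun k => by positivity) fun N => ?_
    have h5 : ∀ k ∈ Finset.range N, ((k + K : ℕ) + 1 : ℝ) * |ρ (k + K + 1)| =
        ((k + K : ℕ) + 1 : ℝ) * ρ (k + K + 1) := fun k _ => by
      rw [abs_of_nonneg (hs _ (by omega))]
    rw [Finset.sum_congr rfl h5, habel]
    have h6 : ((N + K : ℕ) : ℝ) * d (N + K) ≤ 0 :=
      mul_nonpos_of_nonneg_of_nonpos (Nat.cast_nonneg _) (hdneg N)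
    linarith [hMq (N + K)]
  have hsum2 : Summable fun k : ℕ => ((k : ℝ) + 1) * |ρ (k + 1)| :=
    (summable_nat_add_iff (f := fun k : ℕ => ((k : ℝ) + 1) * |ρ (k + 1)|) K).1 hsum
  rw [← summable_nat_add_iff 1]
  refine Summable.of_nonneg_of_le (fun k => by positivity) (fun k => ?_) (hsum2.mul_left 2)
  push_cast
  nlinarith [abs_nonneg (ρ (k + 1)), mul_nonneg (Nat.cast_nonneg k : (0 : ℝ) ≤ k) (abs_nonneg (ρ (k + 1)))]

lemma summable_mul_abs_of_second_difference {q ρ : ℕ → ℝ}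
    (hq : Tendsto q atTop (nhds 0)) (hρ : ∀ k, ρ (k + 1) = 2 * q (k + 1) - q (k + 2) - q k)
    {K : ℕ} (hs : (∀ k, K ≤ k → 0 ≤ ρ k) ∨ ∀ k, K ≤ k → ρ k ≤ 0) :
    Summable fun k : ℕ => ((k : ℝ) + 1) * |ρ k| := by
  rcases hs with hs | hs
  · exact summable_mul_abs_of_second_difference_nonneg hq hρ hs
  · have h := summable_mul_abs_of_second_difference_nonneg (q := fun k => -q k)
      (ρ := fun k => -ρ k) (by simpa using hq.neg) (fun k => by rw [hρ]; ring)
      fun k hk => neg_nonneg.2 (hs k hk)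
    simpa using h

lemma summable_int_mul_abs_of_even {ρ : ℤ → ℝ} (he : ∀ k, ρ (-k) = ρ k)
    (h : Summable fun k : ℕ => ((k : ℝ) + 1) * |ρ k|) :
    Summable fun k : ℤ => (|(k : ℝ)| + 1) * |ρ k| := by
  refine Summable.of_nat_of_neg ?_ ?_
  · simpa using h
  · simpa [he] using h

lemma sum_shift_le_tsum {f : ℤ → ℝ} (hf : Summable f) (h0 : ∀ j, 0 ≤ f j) (n : ℕ) (i : ℤ) :
    ∑ k : Fin n, f (k - i) ≤ ∑' j, f j := by
  let e : Fin n ↪ ℤ := ⟨fun k => (k : ℤ) - i, fun a b hab => by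
    have : ((a : ℕ) : ℤ) - i = (b : ℕ) - i := hab
    exact Fin.ext (by omega)⟩
  have := hf.sum_le_tsum (Finset.univ.map e) fun j _ => h0 j
  rwa [Finset.sum_map] at this

lemma tsum_sub_sum_shift {g : ℤ → ℝ} (hg : Summable g) (n : ℕ) (i : ℤ) :
    ∑' j, g j - ∑ k : Fin n, g (k - i) = ∑' j : ℤ, if 0 ≤ i + j ∧ i + j < n then 0 else g j := by
  let e : Fin n ↪ ℤ := ⟨fun k => (k : ℤ) - i, fun a b hab => by
    have : ((a : ℕ) : ℤ) - i = (b : ℕ) - i := hab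
    exact Fin.ext (by omega)⟩
  have hmem : ∀ j : ℤ, j ∈ Finset.univ.map e ↔ 0 ≤ i + j ∧ i + j < n := by
    intro j
    simp only [Finset.mem_map, Finset.mem_univ, true_and]
    constructor
    · rintro ⟨a, ha⟩
      have : ((a : ℕ) : ℤ) - i = j := ha
      have := a.2
      omega
    · rintro ⟨h1, h2⟩
      refine ⟨⟨(i + j).toNat, by omega⟩, ?_⟩
      change (((i + j).toNat : ℕ) : ℤ) - i = j
      omega
  have h1 : ∑ k : Fin n, g (k - i) = ∑' j : ℤ, if 0 ≤ i + j ∧ i + j < n then g j else 0 := by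
    rw [tsum_eq_sum (s := Finset.univ.map e) fun j hj => if_neg fun h => hj ((hmem j).2 h),
      Finset.sum_map]
    exact Finset.sum_congr rfl fun k _ => (if_pos ((hmem _).1 (Finset.mem_map_of_mem e
      (Finset.mem_univ k)))).symm
  have hs : Summable fun j : ℤ => if 0 ≤ i + j ∧ i + j < n then g j else 0 :=
    summable_of_ne_finset_zero (s := Finset.univ.map e) fun j hj => if_neg fun h => hj ((hmem j).2 h)
  rw [h1, ← hg.tsum_sub hs]
  refine tsum_congr fun j => ?_
  split_ifs <;> ring

lemma card_shift_out_le (n : ℕ) (j : ℤ) :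
    ((Finset.univ.filter fun i : Fin n => ¬(0 ≤ (i : ℤ) + j ∧ (i : ℤ) + j < n)).card : ℤ) ≤ |j| := by
  have hinj : Set.InjOn (fun i : Fin n => (i : ℤ) + j)
      (Finset.univ.filter fun i : Fin n => ¬(0 ≤ (i : ℤ) + j ∧ (i : ℤ) + j < n)) := by
    intro a _ b _ hab
    exact Fin.ext (by simpa using hab)
  rcases le_total 0 j with hj | hj
  · have h := Finset.card_le_card_of_injOn (t := Finset.Ico (n : ℤ) (n + j)) _ (fun i hi => by
      have h1 := (Finset.mem_filter.1 hi).2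
      have h2 := i.2
      exact Finset.mem_coe.2 (Finset.mem_Ico.2 ⟨by omega, by omega⟩)) hinj
    rw [Int.card_Ico] at h
    rw [abs_of_nonneg hj]
    omega
  · have h := Finset.card_le_card_of_injOn (t := Finset.Ico j 0) _ (fun i hi => by
      have h1 := (Finset.mem_filter.1 hi).2
      have h2 := i.2
      exact Finset.mem_coe.2 (Finset.mem_Ico.2 ⟨by omega, by omega⟩)) hinj
    rw [Int.card_Ico] at h
    rw [abs_of_nonpos hj]
    omega

/-- Rate of convergence of the Cesàro-type sums of a summable nonnegative kernel. -/
lemma abs_sum_sum_shift_sub_le {g : ℤ → ℝ} (h0 : ∀ j, 0 ≤ g j)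
    (hg : Summable fun j : ℤ => (|(j : ℝ)| + 1) * g j) (n : ℕ) :
    |∑ i : Fin n, ∑ k : Fin n, g (k - i) - n * ∑' j, g j| ≤
      ∑' j : ℤ, (|(j : ℝ)| + 1) * g j := by
  have hgs : Summable g := Summable.of_nonneg_of_le h0
    (fun j => by nlinarith [mul_nonneg (abs_nonneg (j : ℝ)) (h0 j)]) hg
  set u : Fin n → ℤ → ℝ := fun i j => if 0 ≤ (i : ℤ) + j ∧ (i : ℤ) + j < n then 0 else g j with hu
  have hu0 : ∀ i j, 0 ≤ u i j := fun i j => by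
    simp only [hu]; split_ifs; exacts [le_rfl, h0 j]
  have hus : ∀ i, Summable (u i) := fun i =>
    Summable.of_nonneg_of_le (hu0 i)
      (fun j => by simp only [hu]; split_ifs; exacts [h0 j, le_rfl]) hgs
  have h1 : n * ∑' j, g j - ∑ i : Fin n, ∑ k : Fin n, g (k - i) = ∑' j, ∑ i, u i j := by
    rw [Summable.tsum_finsetSum fun i _ => hus i]
    have : (n : ℝ) * ∑' j, g j = ∑ _i : Fin n, ∑' j, g j := by simp
    rw [this, ← Finset.sum_sub_distrib]
    exact Finset.sum_congr rfl fun i _ => tsum_sub_sum_shift hgs n i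
  have hn : ∀ j, 0 ≤ ∑ i, u i j := fun j => Finset.sum_nonneg fun i _ => hu0 i j
  rw [abs_sub_comm, h1, abs_of_nonneg (tsum_nonneg hn)]
  refine Summable.tsum_le_tsum (fun j => ?_) (summable_sum fun i _ => hus i) hg
  have h2 : ∑ i, u i j =
      (Finset.univ.filter fun i : Fin n => ¬(0 ≤ (i : ℤ) + j ∧ (i : ℤ) + j < n)).card * g j := by
    rw [← nsmul_eq_mul, ← Finset.sum_const, Finset.sum_filter]
    refine Finset.sum_congr rfl fun i _ => ?_
    simp only [hu, ite_not]
  rw [h2]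
  have h3 : ((Finset.univ.filter fun i : Fin n =>
      ¬(0 ≤ (i : ℤ) + j ∧ (i : ℤ) + j < n)).card : ℝ) ≤ |(j : ℝ)| := by
    exact_mod_cast card_shift_out_le n j
  exact mul_le_mul_of_nonneg_right (h3.trans (by linarith)) (h0 j)

section FiniteDifferences

lemma IsCSG.memLp_two {Z : ℤ → Ω → ℝ} {r : ℤ → ℝ} (hZ : IsCSG Z r) (k : ℤ) :
    MemLp (Z k) 2 (ℙ : Measure Ω) := by
  obtain ⟨v, hv⟩ := hZ.2.1 {k} fun _ => 1
  exact memLp_two_of_map_eq (hZ.1 k) (v := v) (by simpa using hv)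

lemma IsCSG.covariance_neg {Z : ℤ → Ω → ℝ} {r : ℤ → ℝ} (hZ : IsCSG Z r) (k : ℤ) :
    r (-k) = r k := by
  have h1 := hZ.2.2.1 k 0
  have h2 := hZ.2.2.1 0 k
  rw [zero_sub] at h1
  rw [sub_zero] at h2
  rw [← h1, ← h2]
  exact integral_congr_ae (ae_of_all _ fun ω => mul_comm _ _)

lemma integral_increment_mul_increment {V : ℤ → Ω → ℝ} {q : ℤ → ℝ}
    (hV : ∀ k, MemLp (V k) 2 (ℙ : Measure Ω)) (hq : ∀ j k, ∫ ω, V j ω * V k ω = q (k - j))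
    (j k : ℤ) : ∫ ω, (V (j + 1) ω - V j ω) * (V (k + 1) ω - V k ω) =
      2 * q (k - j) - q (k - j + 1) - q (k - j - 1) := by
  have hi : ∀ a b, Integrable (fun ω => V a ω * V b ω) := fun a b =>
    (hV a).integrable_mul (hV b)
  have e : ∀ ω, (V (j + 1) ω - V j ω) * (V (k + 1) ω - V k ω) =
      (V (j + 1) ω * V (k + 1) ω + V j ω * V k ω) -
        (V (j + 1) ω * V k ω + V j ω * V (k + 1) ω) := fun ω => by ring
  have ha : ∀ a b c d, Integrable (fun ω => V a ω * V b ω + V c ω * V d ω) :=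
    fun a b c d => (hi a b).add (hi c d)
  simp_rw [e]
  rw [integral_sub (ha _ _ _ _) (ha _ _ _ _), integral_add (hi _ _) (hi _ _),
    integral_add (hi _ _) (hi _ _), hq, hq, hq, hq, add_sub_add_right_eq_sub,
    show k - (j + 1) = k - j - 1 by ring, show k + 1 - j = k - j + 1 by ring]
  ring

lemma exists_covariance_fdiff {Z : ℤ → Ω → ℝ} {r : ℤ → ℝ} (hZ : IsCSG Z r)
    (hr : Tendsto r atTop (nhds 0)) (m : ℕ) :
    (∀ k, MemLp (fdiff m Z k) 2 (ℙ : Measure Ω)) ∧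
      ∃ q : ℤ → ℝ, (∀ j k, ∫ ω, fdiff m Z j ω * fdiff m Z k ω = q (k - j)) ∧
        Tendsto q atTop (nhds 0) := by
  induction m with
  | zero => exact ⟨hZ.memLp_two, r, hZ.2.2.1, hr⟩
  | succ m ih =>
    obtain ⟨hL, q, hq, hlim⟩ := ih
    refine ⟨fun k => (hL (k + 1)).sub (hL k), fun k => 2 * q k - q (k + 1) - q (k - 1),
      integral_increment_mul_increment hL hq, ?_⟩
    have h1 := hlim.comp (tendsto_atTop_add_const_right atTop (1 : ℤ) tendsto_id)
    have h2 := hlim.comp (tendsto_atTop_add_const_right atTop (-1 : ℤ) tendsto_id)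
    simpa [sub_eq_add_neg] using ((hlim.const_mul 2).sub h1).sub h2

lemma tendsto_covariance_of_tendsto_rpow_mul {r : ℤ → ℝ} {α c : ℝ} (hα : 0 < α)
    (hc : Tendsto (fun k : ℕ => (k : ℝ) ^ α * r k) atTop (nhds c)) :
    Tendsto r atTop (nhds 0) := by
  rw [← Nat.map_cast_int_atTop, tendsto_map'_iff]
  have h := ((tendsto_rpow_neg_atTop hα).comp tendsto_natCast_atTop_atTop).mul hc
  rw [zero_mul] at h
  refine h.congr' ?_
  filter_upwards [eventually_gt_atTop 0] with k hk
  have hk0 : (0 : ℝ) < k := by exact_mod_cast hk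
  simp only [Function.comp]
  rw [← mul_assoc, ← Real.rpow_add hk0, neg_add_cancel, Real.rpow_zero, one_mul]

lemma summable_covariance_fdiff {Z : ℤ → Ω → ℝ} {r : ℤ → ℝ} (hZ : IsCSG Z r)
    (hr : Tendsto r atTop (nhds 0)) {m : ℕ} {rp : ℤ → ℝ} (hZp : IsCSG (fdiff (m + 1) Z) rp)
    {K : ℕ} (hs : (∀ k : ℕ, K ≤ k → 0 ≤ rp k) ∨ ∀ k : ℕ, K ≤ k → rp k ≤ 0) :
    Summable fun k : ℤ => (|(k : ℝ)| + 1) * |rp k| := by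
  obtain ⟨hL, q, hq, hlim⟩ := exists_covariance_fdiff hZ hr m
  have hrp : ∀ k, rp k = 2 * q k - q (k + 1) - q (k - 1) := by
    intro k
    have h1 := hZp.2.2.1 0 k
    have h2 := integral_increment_mul_increment hL hq 0 k
    rw [sub_zero] at h1 h2
    rw [← h1, ← h2]
    rfl
  refine summable_int_mul_abs_of_even hZp.covariance_neg
    (summable_mul_abs_of_second_difference (q := fun k => q k)
      (hlim.comp tendsto_natCast_atTop_atTop) (fun k => ?_) hs)
  rw [hrp]
  push_cast
  rw [add_sub_cancel_right, add_assoc (k : ℤ) 1 1]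
  rfl

lemma measurable_U2 {X : ℤ → Ω → ℝ} (hX : ∀ k, Measurable (X k)) (r0 : ℝ) (n : ℕ) :
    Measurable (U2 X r0 n) := by
  unfold U2 Qvar f2
  fun_prop

variable [IsProbabilityMeasure (ℙ : Measure Ω)]

/-- Diagonal representation of the centered quadratic variation of a Gaussian sequence. -/
lemma IsCSG.exists_diagonal {X : ℤ → Ω → ℝ} {ρ : ℤ → ℝ} (hX : IsCSG X ρ)
    (hs : Summable fun j => |ρ j|) {n : ℕ} (hn : 0 < n) :
    ∃ (Y : Fin n → Ω → ℝ) (v : Fin n → ℝ≥0), (∀ j, Measurable (Y j)) ∧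
      (∀ j, Measure.map (Y j) (ℙ : Measure Ω) = gaussianReal 0 (v j)) ∧
      iIndepFun Y (ℙ : Measure Ω) ∧
      (U2 X (ρ 0) n = fun ω => (√n)⁻¹ * ∑ j, (Y j ω ^ 2 - v j)) ∧
      (∀ j, (v j : ℝ) ≤ ∑' j, |ρ j|) ∧ ∑ j, (v j : ℝ) = n * ρ 0 ∧
      ∑ j, (v j : ℝ) ^ 2 = ∑ i : Fin n, ∑ k : Fin n, ρ (k - i) ^ 2 := by
  obtain ⟨Y, v, hY, hl, hi, hsq, hv, htr, htr2⟩ := exists_independent_rotation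
    (P := (ℙ : Measure Ω)) (X := fun (i : Fin n) => X i)
    (C := Matrix.of fun i k : Fin n => ρ ((k : ℤ) - i)) (fun i => hX.1 _)
    (fun a => by
      let e : Fin n ↪ ℤ := ⟨fun k => (k : ℤ), fun a b hab => Fin.ext (by simpa using hab)⟩
      obtain ⟨w, hw⟩ := hX.2.1 (Finset.univ.map e)
        fun k => if h : k.toNat < n then a ⟨k.toNat, h⟩ else 0
      refine ⟨w, ?_⟩
      rw [← hw]
      congr 1
      funext ω
      rw [Finset.sum_map]
      refine Finset.sum_congr rfl fun i _ => ?_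
      have he : e i = ((i : ℕ) : ℤ) := rfl
      simp [he])
    (fun i k => hX.2.2.1 _ _) (fun i => sum_shift_le_tsum hs (fun j => abs_nonneg _) n i)
  have htr1 : ∑ j, (v j : ℝ) = n * ρ 0 := by simpa using htr
  refine ⟨Y, v, hY, hl, hi, ?_, hv, htr1, htr2⟩
  funext ω
  have hn0 : (0 : ℝ) < n := by exact_mod_cast hn
  rw [U2, Qvar, Finset.sum_range, Finset.sum_sub_distrib, hsq, htr1]
  simp only [f2]
  have h1 : √(n : ℝ) * √n = n := Real.mul_self_sqrt hn0.le
  have h2 : √(n : ℝ) ≠ 0 := (Real.sqrt_pos.2 hn0).ne'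
  field_simp
  rw [sq, h1]

/-- Upper bound for a single Lipschitz test function. -/
lemma IsCSG.abs_integral_U2_sub_le {X : ℤ → Ω → ℝ} {ρ : ℤ → ℝ} (hX : IsCSG X ρ)
    (hs : Summable fun j : ℤ => (|(j : ℝ)| + 1) * |ρ j|) {u : ℝ≥0} (hu : 0 < u)
    (hue : (u : ℝ) = 2 * ∑' j, ρ j ^ 2) {n : ℕ} (hn : 0 < n) {h : ℝ → ℝ}
    (hh : LipschitzWith 1 h) :
    |(∫ x, h x ∂Measure.map (U2 X (ρ 0) n) (ℙ : Measure Ω)) - ∫ x, h x ∂gaussianReal 0 u| ≤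
      3 * √(4 * Real.pi) / √u * (√(8 * (∑' j, |ρ j|) ^ 4) +
        2 * ∑' j : ℤ, (|(j : ℝ)| + 1) * ρ j ^ 2) / √n := by
  have hs1 : Summable fun j => |ρ j| := Summable.of_nonneg_of_le (fun j => abs_nonneg _)
    (fun j => le_mul_of_one_le_left (abs_nonneg _) (by linarith [abs_nonneg (j : ℝ)])) hs
  set Λ := ∑' j, |ρ j| with hΛ
  have hρΛ : ∀ j, |ρ j| ≤ Λ := fun j => hs1.le_tsum j fun i _ => abs_nonneg _
  have hs2 : Summable fun j : ℤ => (|(j : ℝ)| + 1) * ρ j ^ 2 := by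
    refine Summable.of_nonneg_of_le (fun j => by positivity) (fun j => ?_) (hs.mul_left Λ)
    rw [← sq_abs, sq, ← mul_assoc, mul_comm]
    exact mul_le_mul_of_nonneg_right (hρΛ j) (by positivity)
  set M := ∑' j : ℤ, (|(j : ℝ)| + 1) * ρ j ^ 2 with hM
  have hM0 : 0 ≤ M := tsum_nonneg fun j => by positivity
  have hn0 : (0 : ℝ) < n := by exact_mod_cast hn
  have hn1 : (1 : ℝ) ≤ n := by exact_mod_cast hn
  have hq0 : 0 < √(n : ℝ) := Real.sqrt_pos.2 hn0
  have hq1 : 1 ≤ √(n : ℝ) := Real.one_le_sqrt.2 hn1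
  have hqq : √(n : ℝ) ^ 2 = n := Real.sq_sqrt hn0.le
  obtain ⟨Y, v, hY, hl, hi, hU, hv, htr, htr2⟩ := hX.exists_diagonal hs1 hn
  rw [hU]
  refine (abs_integral_chaos_sub_le hY hl hi _ hu hh).trans ?_
  rw [mul_div_assoc (3 * √(4 * Real.pi) / √(u : ℝ))]
  refine mul_le_mul_of_nonneg_left ?_ (by positivity)
  rw [add_div]
  refine add_le_add ?_ ?_
  · rw [← Real.sqrt_div (by positivity)]
    refine Real.sqrt_le_sqrt ?_
    have h4 : ∑ j, (v j : ℝ) ^ 4 ≤ n * Λ ^ 4 := by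
      calc ∑ j, (v j : ℝ) ^ 4 ≤ ∑ _j : Fin n, Λ ^ 4 :=
            Finset.sum_le_sum fun j _ => pow_le_pow_left₀ (NNReal.coe_nonneg (v j)) (hv j) 4
        _ = n * Λ ^ 4 := by simp
    calc 8 * (√(n : ℝ))⁻¹ ^ 4 * ∑ j, (v j : ℝ) ^ 4
        ≤ 8 * (√(n : ℝ))⁻¹ ^ 4 * (n * Λ ^ 4) := by gcongr
      _ = 8 * Λ ^ 4 / n := by
          rw [show (√(n : ℝ))⁻¹ ^ 4 = ((√(n : ℝ) ^ 2)⁻¹) ^ 2 by ring, hqq]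
          field_simp
  · have h5 := abs_sum_sum_shift_sub_le (g := fun j => ρ j ^ 2) (fun j => sq_nonneg _) hs2 n
    have h6 : 2 * (√(n : ℝ))⁻¹ ^ 2 * ∑ j, (v j : ℝ) ^ 2 - u =
        2 / n * (∑ i : Fin n, ∑ k : Fin n, ρ (k - i) ^ 2 - n * ∑' j, ρ j ^ 2) := by
      rw [htr2, hue, inv_pow, hqq]
      field_simp
    rw [h6, abs_mul, abs_of_pos (by positivity)]
    calc 2 / (n : ℝ) * _ ≤ 2 / n * M := by gcongr
      _ = 2 * M / √n / √n := by rw [div_div, ← sq, hqq]; ring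
      _ ≤ 2 * M / √n := div_le_self (by positivity) hq1

/-- A sine test function separates the quadratic variation from its Gaussian limit. -/
lemma IsCSG.exists_le_abs_integral_U2_sub {X : ℤ → Ω → ℝ} {ρ : ℤ → ℝ} (hX : IsCSG X ρ)
    (hs : Summable fun j => |ρ j|) (u : ℝ≥0) {n : ℕ} (hn : 0 < n) :
    ∃ h : ℝ → ℝ, LipschitzWith 1 h ∧
      (∑' j, |ρ j|) / 16 * (ρ 0 / ∑' j, |ρ j|) ^ 3 / √n ≤
        |(∫ x, h x ∂Measure.map (U2 X (ρ 0) n) (ℙ : Measure Ω)) - ∫ x, h x ∂gaussianReal 0 u| := by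
  set Λ := ∑' j, |ρ j| with hΛdef
  have hΛ : 0 < Λ := (abs_pos.2 hX.2.2.2.ne').trans_le (hs.le_tsum 0 fun i _ => abs_nonneg _)
  refine ⟨fun x => 2 * Λ * Real.sin ((2 * Λ)⁻¹ * x), lipschitzWith_mul_sin (by positivity), ?_⟩
  obtain ⟨Y, v, hY, hl, hi, hU, hv, htr, -⟩ := hX.exists_diagonal hs hn
  rw [integral_eq_zero_gaussianReal_of_odd (fun x => by simp), sub_zero,
    integral_map (measurable_U2 hX.1 _ _).aemeasurable (by fun_prop), hU]
  simpa using le_abs_integral_sin_chaos hY hl hi hΛ hv (by simpa using hn) (by simpa using htr)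

end FiniteDifferences

/-- optimal Berry–Esséen rate `1/√n` in Wasserstein distance for
the quadratic variation of the `p`-th finite difference. -/
theorem statement_16
    {Ω : Type*} [MeasureSpace Ω] [IsProbabilityMeasure (ℙ : Measure Ω)]
    (Z : ℤ → Ω → ℝ) (r : ℤ → ℝ) (hZ : IsCSG Z r)
    (α c : ℝ) (hα : 0 < α)
    (hc : Filter.Tendsto (fun k : ℕ => (k : ℝ) ^ α * r k) Filter.atTop (nhds c))
    (p : ℕ) (hp : 1 ≤ p)
    (rp : ℤ → ℝ) (hZp : IsCSG (fdiff p Z) rp) (hrp0 : 0 < rp 0)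
    (hmono : ∃ K : ℕ,
      ((∀ k : ℕ, K ≤ k → 0 ≤ rp k) ∨ (∀ k : ℕ, K ≤ k → rp k ≤ 0)) ∧
      ((∀ k : ℕ, K ≤ k → |rp (k + 1)| ≤ |rp k|) ∨
        (∀ k : ℕ, K ≤ k → |rp k| ≤ |rp (k + 1)|))) :
    ∃ c₀ > (0 : ℝ), ∃ C₀ > (0 : ℝ), ∀ n : ℕ, 1 ≤ n →
      c₀ / Real.sqrt n ≤
          dW (Measure.map (U2 (fdiff p Z) (rp 0) n) (ℙ : Measure Ω))
            (gaussianReal 0 (Real.toNNReal (2 * ∑' j : ℤ, (rp j) ^ 2))) ∧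
        dW (Measure.map (U2 (fdiff p Z) (rp 0) n) (ℙ : Measure Ω))
            (gaussianReal 0 (Real.toNNReal (2 * ∑' j : ℤ, (rp j) ^ 2))) ≤
          C₀ / Real.sqrt n := by
  obtain ⟨m, rfl⟩ : ∃ m, p = m + 1 := ⟨p - 1, by omega⟩
  obtain ⟨K, hsign, -⟩ := hmono
  have hs := summable_covariance_fdiff hZ (tendsto_covariance_of_tendsto_rpow_mul hα hc) hZp hsign
  have hs1 : Summable fun j => |rp j| := Summable.of_nonneg_of_le (fun j => abs_nonneg _)
    (fun j => le_mul_of_one_le_left (abs_nonneg _) (by linarith [abs_nonneg (j : ℝ)])) hs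
  have hs2 : Summable fun j => rp j ^ 2 := by
    have h := hs1.mul_left (∑' j, |rp j|)
    refine Summable.of_nonneg_of_le (fun j => sq_nonneg _) (fun j => ?_) h
    rw [← sq_abs, sq]
    exact mul_le_mul_of_nonneg_right (hs1.le_tsum j fun i _ => abs_nonneg _) (abs_nonneg _)
  have hΛ : 0 < ∑' j, |rp j| :=
    (abs_pos.2 hrp0.ne').trans_le (hs1.le_tsum 0 fun i _ => abs_nonneg _)
  have hpos : 0 < 2 * ∑' j, rp j ^ 2 :=
    mul_pos two_pos ((pow_pos hrp0 2).trans_le (hs2.le_tsum 0 fun i _ => sq_nonneg _))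
  set u : ℝ≥0 := Real.toNNReal (2 * ∑' j : ℤ, (rp j) ^ 2) with hu
  have hu0 : 0 < u := Real.toNNReal_pos.2 hpos
  have hue : (u : ℝ) = 2 * ∑' j, rp j ^ 2 := Real.coe_toNNReal _ hpos.le
  have hM : 0 ≤ ∑' j : ℤ, (|(j : ℝ)| + 1) * rp j ^ 2 := tsum_nonneg fun j => by positivity
  have hu1 : 0 < √(u : ℝ) := Real.sqrt_pos.2 (by exact_mod_cast hu0)
  have hub := fun (n : ℕ) (hn : 1 ≤ n) (f : ℝ → ℝ) (hf : LipschitzWith 1 f) =>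
    hZp.abs_integral_U2_sub_le hs hu0 hue hn hf
  refine ⟨(∑' j, |rp j|) / 16 * (rp 0 / ∑' j, |rp j|) ^ 3, by positivity,
    3 * √(4 * Real.pi) / √u * (√(8 * (∑' j, |rp j|) ^ 4) +
      2 * ∑' j : ℤ, (|(j : ℝ)| + 1) * rp j ^ 2), by positivity, fun n hn => ⟨?_, ?_⟩⟩
  · obtain ⟨h, hh, hle⟩ := hZp.exists_le_abs_integral_U2_sub hs1 u hn
    refine hle.trans (le_ciSup (f := fun f : {f : ℝ → ℝ // LipschitzWith 1 f} =>
      |(∫ x, f.1 x ∂Measure.map (U2 (fdiff (m + 1) Z) (rp 0) n) (ℙ : Measure Ω)) -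
        ∫ x, f.1 x ∂gaussianReal 0 u|) ?_ ⟨h, hh⟩)
    exact ⟨_, Set.forall_mem_range.2 fun f => hub n hn f.1 f.2⟩
  · exact Real.iSup_le (fun f => hub n hn f.1 f.2) (by positivity)

end
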